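/- Let N ≥ 2 and 1 ≤ m ≤ N−1. Suppose there is a subset B ⊂ Λ of positive dx measure such that for a.e. x_N ∈ B there is a constant γ(x_N) > 0 with P(·, x_N) ≥ γ(x_N) ρ^(N−1) a.e. on Λ^{N−1}, where ρ^(N−1) is the (N−1)-particle reduction of P. Then V_P = V_{ρ^(m)}. If, in addition, V_P ≠ ∅ and (W + log P)₊ ∈ L¹(Λ^N; P d^N x), then there exists U ∈ V_P, with m-sum structure U(x₁,…,x_N) = Σ_{1≤i₁<⋯<i_m≤N} u(x_{i₁},…,x_{i_m}) a.e., such that ρ_U^(m) = ρ^(m) a.e. on Λ^m; moreover, if U₀, U₁ ∈ V_P (with generators u₀, u₁) satisfy ρ_{U₀}^(m) = ρ_{U₁}^(m) = ρ^(m) a.e., then U₁ − U₀ is equal a.e. on Λ^N to a real constant and u₁ − u₀ is equal a.e. on Λ^m to a real constant. -/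

import Mathlib

open MeasureTheory Real Filter
open scoped ENNReal

noncomputable section

variable {Λ : Type*} [MeasurableSpace Λ]

/-- The product measure on `Λ^k` (the `k`-fold product of `μ`). -/
def pm (μ : Measure Λ) (k : ℕ) : Measure (Fin k → Λ) := Measure.pi fun _ => μ

/-- A function on `Λ^k` is symmetric if it is invariant under all permutations
of its variables. -/
def IsSymm' {Λ : Type*} (k : ℕ) (f : (Fin k → Λ) → ℝ) : Prop :=
  ∀ σ : Equiv.Perm (Fin k), ∀ x, f (x ∘ σ) = f x

/-- The `m`-sum `Σ_{1 ≤ i₁ < ⋯ < i_m ≤ N} v(x_{i₁},…,x_{i_m})`. -/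
def mSum {Λ : Type*} (N m : ℕ) (v : (Fin m → Λ) → ℝ) (x : Fin N → Λ) : ℝ :=
  ∑ s ∈ Finset.powersetCard m (Finset.univ : Finset (Fin N)),
    if h : s.card = m then v (fun i => x (s.orderEmbOfFin h i)) else 0

/-- `V` has `m`-sum structure with (symmetric, measurable, real-valued) generator `v`. -/
def HasSumStruct (μ : Measure Λ) (N m : ℕ) (V : (Fin N → Λ) → ℝ)
    (v : (Fin m → Λ) → ℝ) : Prop :=
  IsSymm' m v ∧ Measurable v ∧ V =ᵐ[pm μ N] mSum N m v

/-- The measure `P d^N x`. -/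
def Pmeas (μ : Measure Λ) (N : ℕ) (P : (Fin N → Λ) → ℝ) : Measure (Fin N → Λ) :=
  (pm μ N).withDensity fun x => ENNReal.ofReal (P x)

/-- The measure `e^{-W} d^N x`. -/
def Wmeas (μ : Measure Λ) (N : ℕ) (W : (Fin N → Λ) → ℝ) : Measure (Fin N → Λ) :=
  (pm μ N).withDensity fun x => ENNReal.ofReal (Real.exp (-(W x)))

/-- The partition function `Z(V) = ∫ e^{-V-W} d^N x`, as an extended nonnegative real. -/
def ZE (μ : Measure Λ) (N : ℕ) (W V : (Fin N → Λ) → ℝ) : ℝ≥0∞ :=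
  ∫⁻ x, ENNReal.ofReal (Real.exp (-(V x) - W x)) ∂(pm μ N)

/-- The partition function `Z(V)` as a real number. -/
def Zfun (μ : Measure Λ) (N : ℕ) (W V : (Fin N → Λ) → ℝ) : ℝ :=
  (ZE μ N W V).toReal

/-- The functional `F_P(V) = exp(-∫ V P d^N x) / Z(V)`. -/
def FP (μ : Measure Λ) (N : ℕ) (P W V : (Fin N → Λ) → ℝ) : ℝ :=
  Real.exp (-∫ x, V x ∂(Pmeas μ N P)) / Zfun μ N W V

/-- Membership in the set `V_P`. -/
def memVP (μ : Measure Λ) (N m : ℕ) (P W V : (Fin N → Λ) → ℝ) : Prop :=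
  Integrable V (Pmeas μ N P) ∧
  Integrable (fun x => Real.exp (-(V x))) (Wmeas μ N W) ∧
  ∃ v, HasSumStruct μ N m V v

/-- Gluing `(y, z) ∈ Λ^m × Λ^{N-m}` into a point of `Λ^N`. -/
def glue {Λ : Type*} {N m : ℕ} (h : m ≤ N) (y : Fin m → Λ) (z : Fin (N - m) → Λ) :
    Fin N → Λ :=
  fun i => Fin.append y z (Fin.cast (by omega) i)

/-- The `m`-particle reduction `ρ^{(m)}` of `P`. -/
def rho (μ : Measure Λ) (N m : ℕ) (h : m ≤ N) (P : (Fin N → Λ) → ℝ)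
    (y : Fin m → Λ) : ℝ :=
  ∫ z, P (glue h y z) ∂(pm μ (N - m))

/-- The measure `ρ^{(m)} d^m x`. -/
def rhomeas (μ : Measure Λ) (N m : ℕ) (h : m ≤ N) (P : (Fin N → Λ) → ℝ) :
    Measure (Fin m → Λ) :=
  (pm μ m).withDensity fun y => ENNReal.ofReal (rho μ N m h P y)

/-- Membership in the set `V_{ρ^{(m)}}`. -/
def memVrho (μ : Measure Λ) (N m : ℕ) (h : m ≤ N) (P W V : (Fin N → Λ) → ℝ) : Prop :=
  Integrable (fun x => Real.exp (-(V x))) (Wmeas μ N W) ∧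
  ∃ v, HasSumStruct μ N m V v ∧ Integrable v (rhomeas μ N m h P)

/-- The `m`-particle density `ρ_U^{(m)}` associated with the potential `U`. -/
def rhoU (μ : Measure Λ) (N m : ℕ) (h : m ≤ N) (W U : (Fin N → Λ) → ℝ)
    (y : Fin m → Λ) : ℝ :=
  (∫ z, Real.exp (-(W (glue h y z)) - U (glue h y z)) ∂(pm μ (N - m))) / Zfun μ N W U


/-- Gluing `y ∈ Λ^{N-1}` and a last coordinate `t ∈ Λ` into a point of `Λ^N`. -/
def glueLast {Λ : Type*} {N : ℕ} (h : 1 ≤ N) (y : Fin (N - 1) → Λ) (t : Λ) :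
    Fin N → Λ :=
  fun i => (Fin.snoc y t : Fin (N - 1 + 1) → Λ) (Fin.cast (by omega : N = N - 1 + 1) i)

/-!
Write `Q = P d^N x` and `H = W + log P`.

*Generators from sums.* The pointwise bound on `P` says that, up to a constant, `Q` dominates the
measure obtained by resampling one coordinate from a fixed law `ν` on `Λ`, hence also every measure
obtained by resampling several of them. Let `x` have law `Q` and let `t` be an independent sample
of `ν^N`. The values of an `m`-sum at all configurations that mix coordinates of `x` and `t`
determine, by a universal linear formula, the value of its generator at the first `m` coordinates
of `x`. So integrability, almost sure convergence and almost sure constancy pass from sums to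
generators.

*Existence.* The maximizers of `F_P` are the minimizers of the Jensen gap
`log ∫ e^f ∂Q - ∫ f ∂Q` over the exponents `f = -V - H`. In a minimizing sequence, normalized by
`∫ e^f ∂Q = 1`, the functions `e^{f/2}` are Cauchy in `L²`, because a midpoint cannot have a much
smaller gap. A subsequence of exponents converges almost everywhere, and Fatou's lemma shows that
the limit is a minimizer. The Euler-Lagrange equation at the minimizer says that the Gibbs measure
and `Q` give equal mean to all bounded `m`-sums, that is, that their `m`-particle marginals agree.

*Uniqueness.* If `e^f` and `e^g` are probability densities giving the same mean to `f - g`, then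
`∫ (f - g) (e^f - e^g) = 0`, and the integrand is nonnegative.
-/

section SubsetSums

variable {ι M : Type*} [DecidableEq ι] [AddCommGroup M]

lemma sum_powersetCard_succ_insert {c : ι} {T : Finset ι} (hc : c ∉ T) (m : ℕ)
    (f : Finset ι → M) :
    ∑ s ∈ (insert c T).powersetCard (m + 1), f s =
      ∑ s ∈ T.powersetCard (m + 1), f s + ∑ s ∈ T.powersetCard m, f (insert c s) := by
  have notMem {k : ℕ} {s : Finset ι} (hs : s ∈ T.powersetCard k) : c ∉ s :=
    fun h => hc ((Finset.mem_powersetCard.1 hs).1 h)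
  rw [Finset.powersetCard_succ_insert hc, Finset.sum_union, Finset.sum_image]
  · intro s hs t ht hst
    rw [← Finset.erase_insert (notMem hs), ← Finset.erase_insert (notMem ht), hst]
  · rw [Finset.disjoint_left]
    rintro _ hs hs'
    obtain ⟨t, -, rfl⟩ := Finset.mem_image.1 hs'
    exact notMem hs (Finset.mem_insert_self c t)

lemma eq_of_forall_insert_eq {α : Type*} {m : ℕ} {X : Finset ι} {f : Finset ι → α}
    (hf : ∀ a ∈ X, ∀ b ∈ X, ∀ r ⊆ X, a ∉ r → b ∉ r → r.card = m →
      f (insert a r) = f (insert b r))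
    {s t : Finset ι} (hsX : s ⊆ X) (htX : t ⊆ X) (hs : s.card = m + 1) (ht : t.card = m + 1) :
    f s = f t := by
  induction hk : (s \ t).card generalizing s with
  | zero =>
    have hst : s ⊆ t := by simpa [Finset.sdiff_eq_empty_iff_subset] using hk
    rw [Finset.eq_of_subset_of_card_le hst (by omega)]
  | succ k ih =>
    obtain ⟨a, ha⟩ : (s \ t).Nonempty := Finset.card_pos.1 (by omega)
    obtain ⟨b, hb⟩ : (t \ s).Nonempty :=
      Finset.card_pos.1 (by rw [Finset.card_sdiff_comm (ht.trans hs.symm)]; omega)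
    rw [Finset.mem_sdiff] at ha hb
    have hbs : b ∉ s.erase a := fun h => hb.2 (Finset.mem_of_mem_erase h)
    have hserase : s.erase a ⊆ X := (s.erase_subset a).trans hsX
    calc f s = f (insert a (s.erase a)) := by rw [Finset.insert_erase ha.1]
      _ = f (insert b (s.erase a)) :=
        hf a (hsX ha.1) b (htX hb.1) _ hserase (s.notMem_erase a) hbs
          (by rw [Finset.card_erase_of_mem ha.1]; omega)
      _ = f t := by
        refine ih (Finset.insert_subset (htX hb.1) hserase) ?_ ?_
        · rw [Finset.card_insert_of_notMem hbs, Finset.card_erase_of_mem ha.1]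
          omega
        · rw [Finset.insert_sdiff_of_mem _ hb.1, Finset.erase_sdiff_comm,
            Finset.card_erase_of_mem (Finset.mem_sdiff.2 ha)]
          omega

/- Comparing the sums over `insert a T` and `insert b T` shows that
`r ↦ f (insert a r) - f (insert b r)` has vanishing sums over `m`-subsets, so that `f` is constant
by induction on `m`. -/
theorem eq_zero_of_sum_powersetCard_eq_zero {ι : Type*} [IsAddTorsionFree M] {m N : ℕ}
    {X : Finset ι} {f : Finset ι → M} (hmN : m ≤ N) (hX : N + m ≤ X.card)
    (hf : ∀ T ⊆ X, T.card = N → ∑ s ∈ T.powersetCard m, f s = 0)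
    {s : Finset ι} (hsX : s ⊆ X) (hs : s.card = m) : f s = 0 := by
  classical
  induction m generalizing N X f s with
  | zero =>
    obtain ⟨T, hTX, hT⟩ := Finset.exists_subset_card_eq (s := X) (n := N) (by omega)
    simpa [Finset.card_eq_zero.1 hs] using hf T hTX hT
  | succ m ih =>
    have hexch : ∀ a ∈ X, ∀ b ∈ X, ∀ r ⊆ X, a ∉ r → b ∉ r → r.card = m →
        f (insert a r) = f (insert b r) := by
      intro a ha b hb r hr har hbr hrm
      refine sub_eq_zero.1 (ih (N := N - 1) (X := (X.erase a).erase b)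
        (f := fun r => f (insert a r) - f (insert b r)) (by omega) ?_ ?_ ?_ hrm)
      · have h₁ := Finset.pred_card_le_card_erase (s := X) (a := a)
        have h₂ := Finset.pred_card_le_card_erase (s := X.erase a) (a := b)
        omega
      · intro T hT hTN
        simp only [Finset.subset_erase] at hT
        have hins {c : ι} (hc : c ∈ X) (hcT : c ∉ T) :=
          sum_powersetCard_succ_insert hcT m f ▸ hf (insert c T)
            (Finset.insert_subset hc hT.1.1) (by rw [Finset.card_insert_of_notMem hcT]; omega)
        rw [Finset.sum_sub_distrib, sub_eq_zero]
        exact add_left_cancel ((hins ha hT.1.2).trans (hins hb hT.2).symm)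
      · exact Finset.subset_erase.2 ⟨Finset.subset_erase.2 ⟨hr, har⟩, hbr⟩
    obtain ⟨T, -, hTX, hT⟩ :=
      Finset.exists_subsuperset_card_eq hsX (n := N) (by omega) (by omega)
    have hconst : ∀ t ∈ T.powersetCard (m + 1), f t = f s := fun t ht =>
      have ht := Finset.mem_powersetCard.1 ht
      eq_of_forall_insert_eq hexch (ht.1.trans hTX) hsX ht.2 hs
    have hsum := hf T hTX hT
    rw [Finset.sum_congr rfl hconst, Finset.sum_const, Finset.card_powersetCard, hT] at hsum
    exact (nsmul_eq_zero_iff_right (Nat.choose_pos hmN).ne').1 hsum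

theorem exists_coeff_sum_powersetCard {ι κ : Type*} [Fintype ι] [Fintype κ] {N m : ℕ}
    (hmN : m ≤ N) (hι : N + m ≤ Fintype.card ι) {T : κ → Finset ι}
    (hT : ∀ S : Finset ι, S.card = N → ∃ k, T k = S) {s : Finset ι} (hs : s.card = m) :
    ∃ c : κ → ℝ, ∀ f : Finset ι → ℝ, f s = ∑ k, c k * ∑ r ∈ (T k).powersetCard m, f r := by
  classical
  let L (S : Finset (Finset ι)) : (Finset ι → ℝ) →ₗ[ℝ] ℝ := ∑ r ∈ S, LinearMap.proj r
  have hL (S : Finset (Finset ι)) (f : Finset ι → ℝ) : L S f = ∑ r ∈ S, f r := by simp [L]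
  have hker : ⨅ k, LinearMap.ker (L ((T k).powersetCard m)) ≤
      LinearMap.ker (LinearMap.proj s : (Finset ι → ℝ) →ₗ[ℝ] ℝ) := fun f hf => by
    simp only [Submodule.mem_iInf, LinearMap.mem_ker, hL] at hf
    refine eq_zero_of_sum_powersetCard_eq_zero hmN hι (fun S _ hS => ?_) (Finset.subset_univ s) hs
    obtain ⟨k, rfl⟩ := hT S hS
    exact hf k
  obtain ⟨c, hc⟩ := (Submodule.mem_span_range_iff_exists_fun ℝ).1
    (mem_span_of_iInf_ker_le_ker hker)
  exact ⟨c, fun f => by simpa [hL] using (LinearMap.congr_fun hc f).symm⟩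

end SubsetSums

section Generators

variable {Λ : Type*}

/-- The first `m` coordinates of a point of `Λ^N`. -/
def firstCoords {N m : ℕ} (h : m ≤ N) (x : Fin N → Λ) : Fin m → Λ :=
  x ∘ Fin.castLE h

lemma IsSymm'.comp_eq_of_range_eq {ι : Type*} {m : ℕ} {v : (Fin m → Λ) → ℝ} (hv : IsSymm' m v)
    (z : ι → Λ) {e e' : Fin m → ι} (he : e.Injective) (he' : e'.Injective)
    (h : Set.range e = Set.range e') : v (z ∘ e) = v (z ∘ e') := by
  let σ : Equiv.Perm (Fin m) :=
    (Equiv.ofInjective e he).trans ((Equiv.setCongr h).trans (Equiv.ofInjective e' he').symm)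
  have hσ : e' ∘ σ = e := funext fun i =>
    Equiv.apply_ofInjective_symm he' (Equiv.setCongr h (Equiv.ofInjective e he i))
  rw [← hσ, ← Function.comp_assoc, hv σ]

/-- The value of a symmetric function `v` at the points `z i`, `i ∈ s`, for an `m`-element set `s`
(and the junk value `0` for other sets). -/
def evalFinset {ι : Type*} {m : ℕ} (v : (Fin m → Λ) → ℝ) (z : ι → Λ) (s : Finset ι) : ℝ :=
  if h : s.card = m then v (fun i => z ((s.equivFinOfCardEq h).symm i)) else 0

lemma evalFinset_map {ι : Type*} {m : ℕ} {v : (Fin m → Λ) → ℝ} (hv : IsSymm' m v) (z : ι → Λ)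
    (e : Fin m ↪ ι) : evalFinset v z (Finset.univ.map e) = v (z ∘ e) := by
  have h : (Finset.univ.map e).card = m := by simp
  rw [evalFinset, dif_pos h]
  refine hv.comp_eq_of_range_eq z
    (e := Subtype.val ∘ ((Finset.univ.map e).equivFinOfCardEq h).symm)
    (Subtype.val_injective.comp (Equiv.injective _)) e.injective ?_
  rw [(Equiv.surjective _).range_comp]
  ext
  simp

lemma mSum_comp_eq_sum_evalFinset {ι : Type*} {N m : ℕ} {v : (Fin m → Λ) → ℝ}
    (hv : IsSymm' m v) (z : ι → Λ) (e : Fin N ↪ ι) :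
    mSum N m v (z ∘ e) = ∑ s ∈ (Finset.univ.map e).powersetCard m, evalFinset v z s := by
  rw [Finset.powersetCard_map, Finset.sum_map, mSum]
  refine Finset.sum_congr rfl fun s hs => ?_
  have hsm : s.card = m := (Finset.mem_powersetCard.1 hs).2
  have hmap := evalFinset_map hv z ((s.orderEmbOfFin hsm).toEmbedding.trans e)
  rw [← Finset.map_map, Finset.map_orderEmbOfFin_univ] at hmap
  rw [dif_pos hsm]
  exact hmap.symm

/-- The embedding of `ι` into two copies of itself sending the points of `A` to the first copy and
the other points, permuted by `τ`, to the second copy. -/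
def transversal {ι : Type*} [DecidableEq ι] (A : Finset ι) (τ : Equiv.Perm ι) : ι ↪ ι ⊕ ι where
  toFun j := if j ∈ A then Sum.inl j else Sum.inr (τ j)
  inj' i j hij := by
    by_cases hi : i ∈ A <;> by_cases hj : j ∈ A <;> simp_all

lemma transversal_apply {ι : Type*} [DecidableEq ι] (A : Finset ι) (τ : Equiv.Perm ι) (j : ι) :
    transversal A τ j = if j ∈ A then Sum.inl j else Sum.inr (τ j) :=
  rfl

lemma sumElim_comp_transversal {ι : Type*} [DecidableEq ι] (A : Finset ι) (τ : Equiv.Perm ι)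
    (x t : ι → Λ) : Sum.elim x t ∘ transversal A τ = A.piecewise x (t ∘ τ) := by
  ext j
  by_cases hj : j ∈ A <;> simp [transversal_apply, hj]

lemma exists_map_transversal_eq {ι : Type*} [Fintype ι] [DecidableEq ι] {T : Finset (ι ⊕ ι)}
    (hT : T.card = Fintype.card ι) : ∃ A τ, Finset.univ.map (transversal A τ) = T := by
  have hcard : T.toLeft.card + T.toRight.card = Fintype.card ι :=
    Finset.card_toLeft_add_card_toRight.trans hT
  let a : {x // x ∉ T.toLeft} ≃ {x // x ∈ T.toRight} := Fintype.equivOfCardEq <| by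
    simp only [Fintype.card_subtype_compl, Fintype.card_coe]
    omega
  refine ⟨T.toLeft, a.extendSubtype, Finset.eq_of_subset_of_card_le ?_ (by simp [hT])⟩
  intro y hy
  obtain ⟨j, -, rfl⟩ := Finset.mem_map.1 hy
  rw [transversal_apply]
  split_ifs with hj
  · exact Finset.mem_toLeft.1 hj
  · exact Finset.mem_toRight.1 (a.extendSubtype_mem j hj)

theorem exists_coeff_firstCoords_eq_sum_mSum {N m : ℕ} (hmN : m ≤ N) :
    ∃ c : Finset (Fin N) × Equiv.Perm (Fin N) → ℝ, ∀ v : (Fin m → Λ) → ℝ, IsSymm' m v →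
      ∀ x t : Fin N → Λ,
        v (firstCoords hmN x) = ∑ p, c p * mSum N m v (p.1.piecewise x (t ∘ p.2)) := by
  let e : Fin m ↪ Fin N ⊕ Fin N := (Fin.castLEEmb hmN).trans Function.Embedding.inl
  obtain ⟨c, hc⟩ := exists_coeff_sum_powersetCard (ι := Fin N ⊕ Fin N) hmN
    (by simp only [Fintype.card_sum, Fintype.card_fin]; omega)
    (T := fun p : Finset (Fin N) × Equiv.Perm (Fin N) => Finset.univ.map (transversal p.1 p.2))
    (fun S hS => Prod.exists.2 (exists_map_transversal_eq (by simpa using hS)))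
    (s := Finset.univ.map e) (by simp)
  refine ⟨c, fun v hv x t => ?_⟩
  calc v (firstCoords hmN x) = evalFinset v (Sum.elim x t) (Finset.univ.map e) :=
        (evalFinset_map hv (Sum.elim x t) e).symm
    _ = ∑ p, c p * mSum N m v (p.1.piecewise x (t ∘ p.2)) := by
        simp_rw [hc (evalFinset v (Sum.elim x t)), ← sumElim_comp_transversal,
          mSum_comp_eq_sum_evalFinset hv]

end Generators

section Fatou

variable {Ω : Type*} [MeasurableSpace Ω] {ν : Measure Ω}

lemma lintegral_liminf_ofReal_le {φ : ℕ → Ω → ℝ} {a : ℕ → ℝ} {b : ℝ}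
    (hφ : ∀ n, Integrable (φ n) ν) (hφ0 : ∀ n x, 0 ≤ φ n x) (hle : ∀ n, ∫ x, φ n x ∂ν ≤ a n)
    (ha : Tendsto a atTop (nhds b)) :
    ∫⁻ x, liminf (fun n => ENNReal.ofReal (φ n x)) atTop ∂ν ≤ ENNReal.ofReal b :=
  calc ∫⁻ x, liminf (fun n => ENNReal.ofReal (φ n x)) atTop ∂ν
      ≤ liminf (fun n => ∫⁻ x, ENNReal.ofReal (φ n x) ∂ν) atTop :=
        lintegral_liminf_le' fun n => (hφ n).aemeasurable.ennreal_ofReal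
    _ ≤ liminf (fun n => ENNReal.ofReal (a n)) atTop := by
        refine liminf_le_liminf (.of_forall fun n => ?_)
        rw [← ofReal_integral_eq_lintegral_ofReal (hφ n) (.of_forall (hφ0 n))]
        exact ENNReal.ofReal_le_ofReal (hle n)
    _ = ENNReal.ofReal b := (ENNReal.tendsto_ofReal ha).liminf_eq

lemma integrable_of_tendsto_of_integral_le {φ : ℕ → Ω → ℝ} {ψ : Ω → ℝ} {a : ℕ → ℝ} {b : ℝ}
    (hφ : ∀ n, Integrable (φ n) ν) (hφ0 : ∀ n x, 0 ≤ φ n x) (hle : ∀ n, ∫ x, φ n x ∂ν ≤ a n)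
    (ha : Tendsto a atTop (nhds b))
    (hlim : ∀ᵐ x ∂ν, Tendsto (fun n => φ n x) atTop (nhds (ψ x))) :
    Integrable ψ ν ∧ ∫ x, ψ x ∂ν ≤ b := by
  have hψ : AEStronglyMeasurable ψ ν :=
    aestronglyMeasurable_of_tendsto_ae atTop (fun n => (hφ n).aestronglyMeasurable) hlim
  have hψ0 : 0 ≤ᵐ[ν] ψ := by
    filter_upwards [hlim] with x hx
    exact ge_of_tendsto' hx fun n => hφ0 n x
  have hb : 0 ≤ b := ge_of_tendsto' ha fun n => (integral_nonneg (hφ0 n)).trans (hle n)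
  have hbound : ∫⁻ x, ENNReal.ofReal (ψ x) ∂ν ≤ ENNReal.ofReal b := by
    rw [lintegral_congr_ae (g := fun x => liminf (fun n => ENNReal.ofReal (φ n x)) atTop)]
    · exact lintegral_liminf_ofReal_le hφ hφ0 hle ha
    · filter_upwards [hlim] with x hx using (ENNReal.tendsto_ofReal hx).liminf_eq.symm
  refine ⟨⟨hψ, (hasFiniteIntegral_iff_ofReal hψ0).2 (hbound.trans_lt ENNReal.ofReal_lt_top)⟩, ?_⟩
  rw [integral_eq_lintegral_of_nonneg_ae hψ0 hψ]
  exact ENNReal.toReal_le_of_le_ofReal hb hbound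

lemma ae_not_tendsto_atTop {φ : ℕ → Ω → ℝ} {a : ℕ → ℝ} {b : ℝ}
    (hφ : ∀ n, Integrable (φ n) ν) (hφ0 : ∀ n x, 0 ≤ φ n x) (hle : ∀ n, ∫ x, φ n x ∂ν ≤ a n)
    (ha : Tendsto a atTop (nhds b)) :
    ∀ᵐ x ∂ν, ¬ Tendsto (fun n => φ n x) atTop atTop := by
  have hmeas : AEMeasurable (fun x => liminf (fun n => ENNReal.ofReal (φ n x)) atTop) ν := by
    simp only [liminf_eq_iSup_iInf_of_nat]
    exact .iSup fun i => .biInf _ (Set.to_countable _) fun n _ =>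
      (hφ n).aemeasurable.ennreal_ofReal
  have hfin := ae_lt_top' hmeas
    ((lintegral_liminf_ofReal_le hφ hφ0 hle ha).trans_lt ENNReal.ofReal_lt_top).ne
  filter_upwards [hfin] with x hx htop
  exact hx.ne (ENNReal.tendsto_ofReal_nhds_top.2 htop).liminf_eq

lemma ae_exists_tendsto_of_integral_sub_sq_lt {g : ℕ → Ω → ℝ} (hg : ∀ n, MemLp (g n) 2 ν)
    (hcau : ∀ N n m, N ≤ n → N ≤ m → ∫ x, (g n x - g m x) ^ 2 ∂ν < (1 / 4) ^ N) :
    ∀ᵐ x ∂ν, ∃ l, Tendsto (fun n => g n x) atTop (nhds l) := by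
  refine Lp.ae_tendsto_of_cauchy_eLpNorm (B := fun N => ENNReal.ofReal ((1 / 2) ^ N))
    (fun n => (hg n).aestronglyMeasurable) one_le_two
    summable_geometric_two.tsum_ofReal_ne_top fun N n m hn hm => ?_
  rw [((hg n).sub (hg m)).eLpNorm_eq_integral_rpow_norm two_ne_zero ENNReal.ofNat_ne_top]
  refine (ENNReal.ofReal_lt_ofReal_iff (by positivity)).2 ?_
  have hquarter : (1 / 4 : ℝ) ^ N = ((1 / 2) ^ N) ^ 2 := by rw [← pow_mul', pow_mul]; norm_num
  simpa [← Real.sqrt_eq_rpow, ← one_div] using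
    (Real.sqrt_lt' (by positivity)).2 (hquarter ▸ hcau N n m hn hm)

end Fatou

section JensenGap

variable {Ω : Type*} [MeasurableSpace Ω] {Q : Measure Ω} {f g : Ω → ℝ}

/-- The integrable functions with integrable exponential, on which `jensenGap Q` is meaningful. -/
def jensenDomain (Q : Measure Ω) : Set (Ω → ℝ) :=
  {f | Integrable f Q ∧ Integrable (fun x => exp (f x)) Q}

/-- The gap `log ∫ e^f dQ - ∫ f dQ` in Jensen's inequality, for a probability measure `Q`. For
`f = -(V + W + log P)` and `Q = P d^N x` it differs from `-log F_P(V)` by the constant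
`∫ (W + log P) dQ`. -/
def jensenGap (Q : Measure Ω) (f : Ω → ℝ) : ℝ :=
  log (∫ x, exp (f x) ∂Q) - ∫ x, f x ∂Q

lemma add_const_mem_jensenDomain [IsFiniteMeasure Q] (hf : f ∈ jensenDomain Q) (c : ℝ) :
    (fun x => f x + c) ∈ jensenDomain Q :=
  ⟨hf.1.add (integrable_const c), by simpa only [exp_add] using hf.2.mul_const (exp c)⟩

lemma memLp_two_exp_half (hf : f ∈ jensenDomain Q) : MemLp (fun x => exp (f x / 2)) 2 Q := by
  have hmeas := (hf.1.aemeasurable.div_const 2).exp.aestronglyMeasurable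
  refine (memLp_two_iff_integrable_sq hmeas).2 (hf.2.congr (.of_forall fun x => ?_))
  simp [← exp_nat_mul, mul_div_cancel₀]

lemma midpoint_mem_jensenDomain (hf : f ∈ jensenDomain Q) (hg : g ∈ jensenDomain Q) :
    (fun x => (f x + g x) / 2) ∈ jensenDomain Q := by
  refine ⟨(hf.1.add hg.1).div_const 2, ?_⟩
  simp only [add_div, exp_add]
  exact (memLp_two_exp_half hf).integrable_mul (memLp_two_exp_half hg)

lemma jensenGap_of_integral_exp_eq_one (hf : ∫ x, exp (f x) ∂Q = 1) :
    jensenGap Q f = -∫ x, f x ∂Q := by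
  simp [jensenGap, hf]

variable [IsProbabilityMeasure Q]

lemma jensenGap_nonneg (hf : f ∈ jensenDomain Q) : 0 ≤ jensenGap Q f :=
  sub_nonneg.2 <| (le_log_iff_exp_le (integral_exp_pos hf.2)).2 <|
    convexOn_exp.map_integral_le continuous_exp.continuousOn isClosed_univ (by simp) hf.1 hf.2

lemma jensenGap_add_const (hf : f ∈ jensenDomain Q) (c : ℝ) :
    jensenGap Q (fun x => f x + c) = jensenGap Q f := by
  simp only [jensenGap, exp_add, integral_mul_const, integral_add hf.1 (integrable_const c),
    integral_const, probReal_univ, one_smul, log_mul (integral_exp_pos hf.2).ne' (exp_pos c).ne',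
    log_exp]
  ring

lemma jensenGap_le (hf : f ∈ jensenDomain Q) :
    jensenGap Q f ≤ ∫ x, exp (f x) ∂Q - 1 - ∫ x, f x ∂Q :=
  sub_le_sub_right (log_le_sub_one_of_pos (integral_exp_pos hf.2)) _

lemma integral_exp_half_sub_sq_le (hf : f ∈ jensenDomain Q) (hg : g ∈ jensenDomain Q)
    (hf1 : ∫ x, exp (f x) ∂Q = 1) (hg1 : ∫ x, exp (g x) ∂Q = 1) :
    ∫ x, (exp (f x / 2) - exp (g x / 2)) ^ 2 ∂Q ≤
      jensenGap Q f + jensenGap Q g - 2 * jensenGap Q (fun x => (f x + g x) / 2) := by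
  have hmid := midpoint_mem_jensenDomain hf hg
  have hsq (x : Ω) : (exp (f x / 2) - exp (g x / 2)) ^ 2 =
      exp (f x) + exp (g x) - 2 * exp ((f x + g x) / 2) := by
    rw [sub_sq, ← exp_nat_mul, ← exp_nat_mul, mul_assoc, ← exp_add]
    push_cast
    ring_nf
  have hint : ∫ x, (exp (f x / 2) - exp (g x / 2)) ^ 2 ∂Q =
      2 - 2 * ∫ x, exp ((f x + g x) / 2) ∂Q := by
    simp_rw [hsq]
    rw [integral_sub (by exact hf.2.add hg.2) (hmid.2.const_mul 2), integral_add hf.2 hg.2,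
      integral_const_mul, hf1, hg1, one_add_one_eq_two]
  have hgap := jensenGap_le hmid
  rw [integral_div, integral_add hf.1 hg.1] at hgap
  rw [hint, jensenGap_of_integral_exp_eq_one hf1, jensenGap_of_integral_exp_eq_one hg1]
  linarith

lemma ae_exists_tendsto_of_jensenGap_lt {f : ℕ → Ω → ℝ} {I : ℝ}
    (hf : ∀ n, f n ∈ jensenDomain Q) (hf1 : ∀ n, ∫ x, exp (f n x) ∂Q = 1)
    (hI : ∀ n m, I ≤ jensenGap Q (fun x => (f n x + f m x) / 2))
    (hlt : ∀ n, jensenGap Q (f n) < I + (1 / 4) ^ n / 2) :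
    ∀ᵐ x ∂Q, ∃ l, Tendsto (fun n => f n x) atTop (nhds l) := by
  have hanti {N n : ℕ} (h : N ≤ n) : (1 / 4 : ℝ) ^ n ≤ (1 / 4) ^ N :=
    pow_le_pow_of_le_one (by norm_num) (by norm_num) h
  have hexp := ae_exists_tendsto_of_integral_sub_sq_lt (fun n => memLp_two_exp_half (hf n))
    fun N n m hn hm => (integral_exp_half_sub_sq_le (hf n) (hf m) (hf1 n) (hf1 m)).trans_lt
      (by linarith [hI n m, hlt n, hlt m, hanti hn, hanti hm])
  have hbdd := ae_not_tendsto_atTop (φ := fun n x => exp (f n x) - f n x)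
    (fun n => (hf n).2.sub (hf n).1) (fun n x => by linarith [add_one_le_exp (f n x)])
    (a := fun _ => 1 + (I + 1 / 2)) (fun n => ?_) tendsto_const_nhds
  · filter_upwards [hexp, hbdd] with x ⟨l, hl⟩ hx
    rcases (ge_of_tendsto' hl fun n => (exp_pos _).le).eq_or_lt with rfl | hl0
    · have hbot : Tendsto (fun n => f n x) atTop atBot :=
        (tendsto_div_const_atBot_of_pos two_pos).1 (tendsto_exp_comp_nhds_zero.1 hl)
      refine absurd (tendsto_atTop_mono (fun n => ?_) (tendsto_neg_atBot_atTop.comp hbot)) hx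
      simpa [sub_eq_add_neg] using (exp_pos (f n x)).le
    · exact ⟨2 * log l, by simpa [mul_div_cancel₀] using (hl.log hl0.ne').const_mul 2⟩
  · have hgap := hlt n
    rw [jensenGap_of_integral_exp_eq_one (hf1 n)] at hgap
    rw [integral_sub (hf n).2 (hf n).1, hf1]
    linarith [hanti n.zero_le]

lemma mem_jensenDomain_of_tendsto {f : ℕ → Ω → ℝ} {a : ℕ → ℝ} {I : ℝ}
    (hf : ∀ n, f n ∈ jensenDomain Q) (hf1 : ∀ n, ∫ x, exp (f n x) ∂Q = 1)
    (hle : ∀ n, jensenGap Q (f n) ≤ a n) (ha : Tendsto a atTop (nhds I))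
    (hlim : ∀ᵐ x ∂Q, Tendsto (fun n => f n x) atTop (nhds (g x))) :
    g ∈ jensenDomain Q ∧ jensenGap Q g ≤ I := by
  have hexp := integrable_of_tendsto_of_integral_le (fun n => (hf n).2)
    (fun n x => (exp_pos _).le) (fun n => (hf1 n).le) tendsto_const_nhds
    (hlim.mono fun x hx => hx.rexp)
  have hsub := integrable_of_tendsto_of_integral_le (φ := fun n x => exp (f n x) - f n x)
    (fun n => (hf n).2.sub (hf n).1) (fun n x => by linarith [add_one_le_exp (f n x)])
    (a := fun n => 1 + a n) (fun n => ?_) (ha.const_add 1)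
    (hlim.mono fun x hx => hx.rexp.sub hx)
  · have hg : g ∈ jensenDomain Q :=
      ⟨(hexp.1.sub hsub.1).congr (.of_forall fun x => sub_sub_cancel _ _), hexp.1⟩
    have hgap := jensenGap_le hg
    have hint := hsub.2
    rw [integral_sub hg.2 hg.1] at hint
    exact ⟨hg, by linarith⟩
  · rw [integral_sub (hf n).2 (hf n).1, hf1]
    linarith [hle n, jensenGap_of_integral_exp_eq_one (hf1 n)]

lemma exists_integral_exp_eq_one_jensenGap_lt {S : Set (Ω → ℝ)}
    (hS : (S ∩ jensenDomain Q).Nonempty) (hconst : ∀ f ∈ S, ∀ c : ℝ, (fun x => f x + c) ∈ S)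
    {I : ℝ} (hI : sInf (jensenGap Q '' (S ∩ jensenDomain Q)) < I) :
    ∃ f ∈ S ∩ jensenDomain Q, ∫ x, exp (f x) ∂Q = 1 ∧ jensenGap Q f < I := by
  obtain ⟨_, ⟨f, ⟨hfS, hf⟩, rfl⟩, hfI⟩ := exists_lt_of_csInf_lt (hS.image _) hI
  have hpos := integral_exp_pos hf.2
  refine ⟨fun x => f x + -log (∫ x, exp (f x) ∂Q),
    ⟨hconst f hfS _, add_const_mem_jensenDomain hf _⟩, ?_, by rwa [jensenGap_add_const hf]⟩
  simp only [exp_add, integral_mul_const, exp_neg, exp_log hpos, mul_inv_cancel₀ hpos.ne']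

theorem exists_isMinOn_jensenGap {S : Set (Ω → ℝ)} (hS : (S ∩ jensenDomain Q).Nonempty)
    (hconst : ∀ f ∈ S, ∀ c : ℝ, (fun x => f x + c) ∈ S)
    (hmid : ∀ f ∈ S, ∀ g ∈ S, (fun x => (f x + g x) / 2) ∈ S)
    (hlim : ∀ f : ℕ → Ω → ℝ, (∀ n, f n ∈ S) →
      (∀ᵐ x ∂Q, ∃ l, Tendsto (fun n => f n x) atTop (nhds l)) →
      ∃ g ∈ S, ∀ᵐ x ∂Q, Tendsto (fun n => f n x) atTop (nhds (g x))) :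
    ∃ f ∈ S ∩ jensenDomain Q, IsMinOn (jensenGap Q) (S ∩ jensenDomain Q) f := by
  set I := sInf (jensenGap Q '' (S ∩ jensenDomain Q))
  have hI {f : Ω → ℝ} (hf : f ∈ S ∩ jensenDomain Q) : I ≤ jensenGap Q f :=
    csInf_le ⟨0, Set.forall_mem_image.2 fun f hf => jensenGap_nonneg hf.2⟩ ⟨f, hf, rfl⟩
  choose f hf hf1 hlt using fun n : ℕ =>
    exists_integral_exp_eq_one_jensenGap_lt hS hconst
      (lt_add_of_pos_right I (by positivity : (0 : ℝ) < (1 / 4) ^ n / 2))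
  obtain ⟨g, hgS, hg⟩ := hlim f (fun n => (hf n).1) <|
    ae_exists_tendsto_of_jensenGap_lt (fun n => (hf n).2) hf1
      (fun n m => hI ⟨hmid _ (hf n).1 _ (hf m).1, midpoint_mem_jensenDomain (hf n).2 (hf m).2⟩) hlt
  have hrate : Tendsto (fun n : ℕ => I + (1 / 4 : ℝ) ^ n / 2) atTop (nhds I) := by
    simpa using ((tendsto_pow_atTop_nhds_zero_of_lt_one (by norm_num) (by norm_num :
      (1 / 4 : ℝ) < 1)).div_const 2).const_add I
  obtain ⟨hgD, hgI⟩ := mem_jensenDomain_of_tendsto (fun n => (hf n).2) hf1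
    (fun n => (hlt n).le) hrate hg
  exact ⟨g, ⟨hgS, hgD⟩, fun h hh => hgI.trans (hI hh)⟩

lemma jensenGap_add_mul {w : Ω → ℝ} (hf : f ∈ jensenDomain Q) (hw : Integrable w Q) (t : ℝ)
    (hexp : Integrable (fun x => exp (f x + t * w x)) Q) :
    jensenGap Q (fun x => f x + t * w x) =
      jensenGap Q f + (ProbabilityTheory.cgf w (Q.tilted f) t - t * ∫ x, w x ∂Q) := by
  have htilt := integral_exp_tilted (μ := Q) f fun x => t * w x
  simp only [Pi.add_apply] at htilt
  rw [jensenGap, ProbabilityTheory.cgf, ProbabilityTheory.mgf, htilt,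
    log_div (integral_exp_pos hexp).ne' (integral_exp_pos hf.2).ne',
    integral_add hf.1 (hw.const_mul t), integral_const_mul, jensenGap]
  ring

/- The derivative of `t ↦ jensenGap Q (f + t w)` at `0` is `∫ w d(Q.tilted f) - ∫ w dQ`. -/
theorem integral_tilted_eq_of_isMinOn_jensenGap {S : Set (Ω → ℝ)} {w : Ω → ℝ} {K : ℝ}
    (hf : f ∈ S ∩ jensenDomain Q) (hmin : IsMinOn (jensenGap Q) (S ∩ jensenDomain Q) f)
    (hw : Measurable w) (hwK : ∀ x, |w x| ≤ K) (hline : ∀ t : ℝ, (fun x => f x + t * w x) ∈ S) :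
    ∫ x, w x ∂(Q.tilted f) = ∫ x, w x ∂Q := by
  have : IsProbabilityMeasure (Q.tilted f) := isProbabilityMeasure_tilted hf.2.2
  have hwQ : Integrable w Q := .of_bound hw.aestronglyMeasurable K (.of_forall hwK)
  have hset : ProbabilityTheory.integrableExpSet w (Q.tilted f) = Set.univ :=
    Set.eq_univ_of_forall fun t => ProbabilityTheory.integrable_exp_mul_of_mem_Icc
      hw.aemeasurable (.of_forall fun x => abs_le.1 (hwK x))
  have hexp (t : ℝ) : Integrable (fun x => exp (f x + t * w x)) Q := by
    simpa [exp_add] using (integrable_tilted_iff hf.2.2 _).1 (hset ▸ Set.mem_univ t :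
      t ∈ ProbabilityTheory.integrableExpSet w (Q.tilted f))
  have hderiv : HasDerivAt (fun t => ProbabilityTheory.cgf w (Q.tilted f) t - t * ∫ x, w x ∂Q)
      (∫ x, w x ∂(Q.tilted f) - ∫ x, w x ∂Q) 0 := by
    have hmgf := ProbabilityTheory.hasDerivAt_mgf (X := w) (μ := Q.tilted f) (t := 0)
      (by simp [hset])
    exact ((hmgf.log (by simp)).sub ((hasDerivAt_id' 0).mul_const _)).congr_deriv (by simp)
  refine sub_eq_zero.1 (IsLocalMin.hasDerivAt_eq_zero (.of_forall fun t => ?_) hderiv)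
  have hle := isMinOn_iff.1 hmin _ ⟨hline t, hf.2.1.add (hwQ.const_mul t), hexp t⟩
  rw [jensenGap_add_mul hf.2 hwQ t (hexp t)] at hle
  simpa using hle

end JensenGap

section Tilted

variable {Ω : Type*} [MeasurableSpace Ω] {ν : Measure Ω} {f g : Ω → ℝ}

lemma integrable_of_integrable_max_zero_of_integrable_exp_neg (hf : AEStronglyMeasurable f ν)
    (hpos : Integrable (fun x => max (f x) 0) ν) (hexp : Integrable (fun x => exp (-f x)) ν) :
    Integrable f ν := by
  refine (hpos.add hexp).mono' hf (.of_forall fun x => ?_)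
  have hle := add_one_le_exp (-f x)
  have hexp_pos := exp_pos (-f x)
  rw [Real.norm_eq_abs, Pi.add_apply]
  rcases abs_cases (f x) with h | h <;> rcases max_cases (f x) 0 with h' | h' <;> linarith

lemma sub_mul_exp_sub_exp_nonneg (a b : ℝ) : 0 ≤ (a - b) * (exp a - exp b) := by
  rcases le_total a b with h | h
  · exact mul_nonneg_of_nonpos_of_nonpos (sub_nonpos.2 h) (sub_nonpos.2 (exp_le_exp.2 h))
  · exact mul_nonneg (sub_nonneg.2 h) (sub_nonneg.2 (exp_le_exp.2 h))

lemma exp_sub_log_integral_exp [NeZero ν] (hf : Integrable (fun x => exp (f x)) ν) (x : Ω) :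
    exp (f x - log (∫ y, exp (f y) ∂ν)) = exp (f x) / ∫ y, exp (f y) ∂ν := by
  rw [exp_sub, exp_log (integral_exp_pos hf)]

lemma integrable_exp_sub_log_mul_of_tilted [NeZero ν] (hf : Integrable (fun x => exp (f x)) ν)
    (hg : Integrable g (ν.tilted f)) :
    Integrable (fun x => exp (f x - log (∫ y, exp (f y) ∂ν)) * g x) ν := by
  simp_rw [exp_sub_log_integral_exp hf, div_mul_eq_mul_div]
  exact ((integrable_tilted_iff hf g).1 hg).div_const _

lemma integral_tilted_eq_integral_exp_sub_log_mul [NeZero ν]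
    (hf : Integrable (fun x => exp (f x)) ν) (g : Ω → ℝ) :
    ∫ x, g x ∂(ν.tilted f) = ∫ x, exp (f x - log (∫ y, exp (f y) ∂ν)) * g x ∂ν := by
  simp_rw [integral_tilted, exp_sub_log_integral_exp hf, smul_eq_mul]

/- With `a = f - log ∫ e^f` and `b = g - log ∫ e^g`, the hypothesis says that the nonnegative
function `(a - b) (e^a - e^b)` has integral zero. -/
theorem exists_sub_ae_eq_const_of_integral_tilted_eq
    (hf : Integrable (fun x => exp (f x)) ν) (hg : Integrable (fun x => exp (g x)) ν)
    (hfi : Integrable (fun x => f x - g x) (ν.tilted f))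
    (hgi : Integrable (fun x => f x - g x) (ν.tilted g))
    (heq : ∫ x, (f x - g x) ∂(ν.tilted f) = ∫ x, (f x - g x) ∂(ν.tilted g)) :
    ∃ c : ℝ, (fun x => f x - g x) =ᵐ[ν] fun _ => c := by
  rcases eq_zero_or_neZero ν with rfl | hν
  · exact ⟨0, by simp only [EventuallyEq, ae_zero, eventually_bot]⟩
  have := isProbabilityMeasure_tilted hf
  have := isProbabilityMeasure_tilted hg
  let a : Ω → ℝ := fun x => f x - log (∫ y, exp (f y) ∂ν)
  let b : Ω → ℝ := fun x => g x - log (∫ y, exp (g y) ∂ν)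
  let c : ℝ := log (∫ y, exp (f y) ∂ν) - log (∫ y, exp (g y) ∂ν)
  have hsub (x : Ω) : a x - b x = f x - g x - c := by ring
  have hai : Integrable (fun x => exp (a x) * (f x - g x - c)) ν :=
    integrable_exp_sub_log_mul_of_tilted hf (hfi.sub (integrable_const c))
  have hbi : Integrable (fun x => exp (b x) * (f x - g x - c)) ν :=
    integrable_exp_sub_log_mul_of_tilted hg (hgi.sub (integrable_const c))
  have hmul (x : Ω) : (a x - b x) * (exp (a x) - exp (b x)) =
      exp (a x) * (f x - g x - c) - exp (b x) * (f x - g x - c) := by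
    rw [hsub, ← sub_mul, mul_comm]
  have hzero : ∫ x, (a x - b x) * (exp (a x) - exp (b x)) ∂ν = 0 := by
    simp_rw [hmul]
    rw [integral_sub hai hbi, ← integral_tilted_eq_integral_exp_sub_log_mul hf,
      ← integral_tilted_eq_integral_exp_sub_log_mul hg, integral_sub hfi (integrable_const c),
      integral_sub hgi (integrable_const c), heq]
    simp
  have hae := (integral_eq_zero_iff_of_nonneg (fun x => sub_mul_exp_sub_exp_nonneg (a x) (b x))
    ((hai.sub hbi).congr (.of_forall fun x => (hmul x).symm))).1 hzero
  refine ⟨c, hae.mono fun x hx => ?_⟩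
  have hab : a x = b x := by
    rcases mul_eq_zero.1 hx with h | h
    · exact sub_eq_zero.1 h
    · exact exp_injective (sub_eq_zero.1 h)
  linarith [hsub x]

end Tilted

section ProductMeasure

theorem map_withDensity_of_measurePreserving_prod {α β γ : Type*} [MeasurableSpace α]
    [MeasurableSpace β] [MeasurableSpace γ] {μ : Measure α} {ν : Measure β} [SFinite ν]
    {τ : Measure γ} {g : α × β → γ} (hg : MeasurePreserving g (μ.prod ν) τ) {r : γ → α}
    (hr : Measurable r) (hrg : ∀ q, r (g q) = q.1) {p : γ → ℝ≥0∞} (hp : Measurable p) :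
    (τ.withDensity p).map r = μ.withDensity fun a => ∫⁻ b, p (g (a, b)) ∂ν := by
  have hpg : Measurable fun q => p (g q) := hp.comp hg.measurable
  refine Measure.ext_of_lintegral _ fun f hf => ?_
  calc ∫⁻ a, f a ∂((τ.withDensity p).map r) = ∫⁻ c, p c * f (r c) ∂τ := by
        rw [lintegral_map hf hr]
        exact lintegral_withDensity_eq_lintegral_mul _ hp (hf.comp hr)
    _ = ∫⁻ q, p (g q) * f q.1 ∂(μ.prod ν) := by
        simpa only [Function.comp_apply, Pi.mul_apply, hrg] using
          (hg.lintegral_comp (hp.mul (hf.comp hr))).symm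
    _ = ∫⁻ a, (∫⁻ b, p (g (a, b)) ∂ν) * f a ∂μ := by
        rw [lintegral_prod (fun q => p (g q) * f q.1)
          (hpg.mul (hf.comp measurable_fst)).aemeasurable]
        exact lintegral_congr fun a =>
          lintegral_mul_const (f a) (f := fun b => p (g (a, b))) (hpg.comp measurable_prodMk_left)
    _ = ∫⁻ a, f a ∂(μ.withDensity fun a => ∫⁻ b, p (g (a, b)) ∂ν) :=
        (lintegral_withDensity_eq_lintegral_mul _ hpg.lintegral_prod_right' hf).symm

variable (μ : Measure Λ) [SigmaFinite μ]

lemma measurable_comp_right {ι κ : Type*} (e : κ → ι) : Measurable fun x : ι → Λ => x ∘ e :=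
  measurable_pi_lambda _ fun _ => measurable_pi_apply _

lemma measurePreserving_pi_comp_equiv {ι κ : Type*} [Fintype ι] [Fintype κ] (e : κ ≃ ι) :
    MeasurePreserving (fun x : ι → Λ => x ∘ e) (Measure.pi fun _ => μ) (Measure.pi fun _ => μ) := by
  refine (measurePreserving_piCongrLeft (fun _ => μ) e.symm).congr
    (measurable_comp_right e) (.of_forall fun x => funext fun i => ?_)
  simpa using MeasurableEquiv.piCongrLeft_apply_apply (β := fun _ => Λ) e.symm x (e i)

lemma measurePreserving_pi_sumElim_comp {ι κ η : Type*} [Fintype ι] [Fintype κ] [Fintype η]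
    (e : η ≃ ι ⊕ κ) :
    MeasurePreserving (fun p : (ι → Λ) × (κ → Λ) => Sum.elim p.1 p.2 ∘ e)
      ((Measure.pi fun _ => μ).prod (Measure.pi fun _ => μ)) (Measure.pi fun _ => μ) := by
  have hsum : MeasurePreserving (fun p : (ι → Λ) × (κ → Λ) => Sum.elim p.1 p.2)
      ((Measure.pi fun _ => μ).prod (Measure.pi fun _ => μ)) (Measure.pi fun _ => μ) := by
    convert measurePreserving_sumPiEquivProdPi_symm (X := fun _ : ι ⊕ κ => Λ) fun _ => μ using 1
    ext p i
    cases i <;> rfl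
  exact (measurePreserving_pi_comp_equiv μ e).comp hsum

instance pm.instSigmaFinite (k : ℕ) : SigmaFinite (pm μ k) := by
  unfold pm
  infer_instance

lemma glue_eq_sumElim_comp {Λ : Type*} {N m : ℕ} (h : m ≤ N) (y : Fin m → Λ)
    (z : Fin (N - m) → Λ) :
    glue h y z = Sum.elim y z ∘
      ((finCongr (Nat.add_sub_cancel' h).symm).trans finSumFinEquiv.symm) := by
  ext i
  obtain ⟨j, rfl⟩ :=
    ((finCongr (Nat.add_sub_cancel' h).symm).trans finSumFinEquiv.symm).symm.surjective i
  cases j <;> simp [glue]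

lemma glueLast_eq_sumElim_comp {Λ : Type*} {N : ℕ} (h : 1 ≤ N) (y : Fin (N - 1) → Λ) (t : Λ) :
    glueLast h y t = Sum.elim y (fun _ : Fin 1 => t) ∘
      ((finCongr (Nat.sub_add_cancel h).symm).trans finSumFinEquiv.symm) := by
  ext i
  obtain ⟨j, rfl⟩ :=
    ((finCongr (Nat.sub_add_cancel h).symm).trans finSumFinEquiv.symm).symm.surjective i
  rw [glueLast, ← Fin.append_right_eq_snoc y (fun _ : Fin 1 => t)]
  cases j <;> simp

lemma measurePreserving_glue {N m : ℕ} (h : m ≤ N) :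
    MeasurePreserving (fun p : (Fin m → Λ) × (Fin (N - m) → Λ) => glue h p.1 p.2)
      ((pm μ m).prod (pm μ (N - m))) (pm μ N) := by
  simp_rw [glue_eq_sumElim_comp]
  exact measurePreserving_pi_sumElim_comp μ _

lemma measurePreserving_glueLast {N : ℕ} (h : 1 ≤ N) :
    MeasurePreserving (fun p : (Fin (N - 1) → Λ) × Λ => glueLast h p.1 p.2)
      ((pm μ (N - 1)).prod μ) (pm μ N) := by
  simp_rw [glueLast_eq_sumElim_comp]
  exact (measurePreserving_pi_sumElim_comp μ _).comp
    ((MeasurePreserving.id _).prod (measurePreserving_funUnique μ (Fin 1)).symm)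

lemma firstCoords_glue {Λ : Type*} {N m : ℕ} (h : m ≤ N) (y : Fin m → Λ) (z : Fin (N - m) → Λ) :
    firstCoords h (glue h y z) = y := by
  ext i
  simp [firstCoords, glue]

lemma measurable_firstCoords {N m : ℕ} (h : m ≤ N) :
    Measurable (firstCoords h : (Fin N → Λ) → Fin m → Λ) :=
  measurable_comp_right _

lemma map_firstCoords_withDensity_ofReal {N m : ℕ} (h : m ≤ N)
    {p : (Fin N → Λ) → ℝ} (hp : Measurable p) (hpi : Integrable p (pm μ N))
    (hp0 : 0 ≤ᵐ[pm μ N] p) :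
    ((pm μ N).withDensity fun x => ENNReal.ofReal (p x)).map (firstCoords h)
      = (pm μ m).withDensity fun y => ENNReal.ofReal (∫ z, p (glue h y z) ∂(pm μ (N - m))) := by
  have hg := measurePreserving_glue μ h
  have hi : Integrable (fun q : (Fin m → Λ) × (Fin (N - m) → Λ) => p (glue h q.1 q.2))
      ((pm μ m).prod (pm μ (N - m))) := hg.integrable_comp_of_integrable hpi
  have h0 : ∀ᵐ q ∂((pm μ m).prod (pm μ (N - m))), 0 ≤ p (glue h q.1 q.2) :=
    hg.quasiMeasurePreserving.ae hp0
  rw [map_withDensity_of_measurePreserving_prod hg (measurable_firstCoords h)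
    (fun q => firstCoords_glue h q.1 q.2) hp.ennreal_ofReal]
  refine withDensity_congr_ae ?_
  filter_upwards [hi.prod_right_ae, Measure.ae_ae_of_ae_prod h0] with y hy hy0
  exact (ofReal_integral_eq_lintegral_ofReal hy hy0).symm

end ProductMeasure

section PermInvariant

/-- Invariance of a measure on a power of `Λ` under permutations of the coordinates. -/
def PermInvariant {ι : Type*} (Q : Measure (ι → Λ)) : Prop :=
  ∀ σ : Equiv.Perm ι, MeasurePreserving (fun x : ι → Λ => x ∘ σ) Q Q

lemma permInvariant_pm (μ : Measure Λ) [SigmaFinite μ] (N : ℕ) : PermInvariant (pm μ N) :=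
  measurePreserving_pi_comp_equiv μ

lemma PermInvariant.withDensity {ι : Type*} {Q : Measure (ι → Λ)} (hQ : PermInvariant Q)
    {p : (ι → Λ) → ℝ≥0∞} (hp : Measurable p)
    (hs : ∀ σ : Equiv.Perm ι, ∀ᵐ x ∂Q, p (x ∘ σ) = p x) : PermInvariant (Q.withDensity p) := by
  intro σ
  have hσ := measurable_comp_right (Λ := Λ) σ
  refine ⟨hσ, Measure.ext_of_lintegral _ fun f hf => ?_⟩
  calc ∫⁻ x, f x ∂((Q.withDensity p).map (· ∘ σ)) = ∫⁻ x, p x * f (x ∘ σ) ∂Q := by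
        rw [lintegral_map hf hσ]
        exact lintegral_withDensity_eq_lintegral_mul _ hp (hf.comp hσ)
    _ = ∫⁻ x, p (x ∘ σ) * f (x ∘ σ) ∂Q :=
        lintegral_congr_ae <| (hs σ).mono fun x hx => congrArg (· * f (x ∘ σ)) hx.symm
    _ = ∫⁻ x, f x ∂(Q.withDensity p) := by
        rw [lintegral_withDensity_eq_lintegral_mul _ hp hf]
        exact (hQ σ).lintegral_comp (hp.mul hf)

lemma exists_perm_firstCoords_comp_eq {Λ : Type*} {N m : ℕ} (h : m ≤ N) (e : Fin m ↪ Fin N) :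
    ∃ σ : Equiv.Perm (Fin N), ∀ x : Fin N → Λ, firstCoords h (x ∘ σ) = x ∘ e := by
  have := Equiv.Perm.isMultiplyPretransitive (Fin N) m
  obtain ⟨σ, hσ⟩ := MulAction.exists_smul_eq (Equiv.Perm (Fin N)) (Fin.castLEEmb h) e
  exact ⟨σ, fun x => hσ ▸ rfl⟩

lemma PermInvariant.measurePreserving_comp_embedding {N m : ℕ} {Q : Measure (Fin N → Λ)}
    (hQ : PermInvariant Q) (h : m ≤ N) (e : Fin m ↪ Fin N) :
    MeasurePreserving (fun x : Fin N → Λ => x ∘ e) Q (Q.map (firstCoords h)) := by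
  obtain ⟨σ, hσ⟩ := exists_perm_firstCoords_comp_eq (Λ := Λ) h e
  simp_rw [← hσ]
  exact ((measurable_firstCoords h).measurePreserving Q).comp (hQ σ)

lemma PermInvariant.map_firstCoords {N m : ℕ} {Q : Measure (Fin N → Λ)} (hQ : PermInvariant Q)
    (h : m ≤ N) : PermInvariant (Q.map (firstCoords h)) := fun σ =>
  ⟨measurable_comp_right σ, by
    rw [Measure.map_map (measurable_comp_right σ) (measurable_firstCoords h)]
    exact (hQ.measurePreserving_comp_embedding h (σ.toEmbedding.trans (Fin.castLEEmb h))).map_eq⟩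

/-- The symmetric measurable functions on `Λ^m`: the possible generators of `m`-sums. -/
def symmGenerators (Λ : Type*) [MeasurableSpace Λ] (m : ℕ) : Submodule ℝ ((Fin m → Λ) → ℝ) where
  carrier := {v | IsSymm' m v ∧ Measurable v}
  add_mem' hv hw := ⟨fun σ x => congrArg₂ (· + ·) (hv.1 σ x) (hw.1 σ x), hv.2.add hw.2⟩
  zero_mem' := ⟨fun _ _ => rfl, measurable_const⟩
  smul_mem' c _ hv := ⟨fun σ x => congrArg (c • ·) (hv.1 σ x), hv.2.const_smul c⟩

lemma const_mem_symmGenerators (m : ℕ) (c : ℝ) : (fun _ => c) ∈ symmGenerators Λ m :=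
  ⟨fun _ _ => rfl, measurable_const⟩

/-- The sum of `f` over all permutations of its variables (not normalised). -/
def symmetrize {Λ : Type*} {m : ℕ} (f : (Fin m → Λ) → ℝ) (y : Fin m → Λ) : ℝ :=
  ∑ σ : Equiv.Perm (Fin m), f (y ∘ σ)

lemma symmetrize_mem_symmGenerators {m : ℕ} {f : (Fin m → Λ) → ℝ} (hf : Measurable f) :
    symmetrize f ∈ symmGenerators Λ m :=
  ⟨fun σ y => Equiv.sum_comp (Equiv.mulLeft σ) fun τ : Equiv.Perm (Fin m) => f (y ∘ τ),
    Finset.measurable_sum _ fun σ _ => hf.comp (measurable_comp_right σ)⟩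

lemma PermInvariant.integral_symmetrize {m : ℕ} {ν : Measure (Fin m → Λ)} (hν : PermInvariant ν)
    {f : (Fin m → Λ) → ℝ} (hf : Integrable f ν) :
    ∫ y, symmetrize f y ∂ν = m.factorial * ∫ y, f y ∂ν := by
  have hσ (σ : Equiv.Perm (Fin m)) : ∫ y, f (y ∘ σ) ∂ν = ∫ y, f y ∂ν := by
    conv_rhs => rw [← (hν σ).map_eq]
    rw [integral_map (measurable_comp_right σ).aemeasurable (by rw [(hν σ).map_eq]; exact hf.1)]
  have hi (σ : Equiv.Perm (Fin m)) : Integrable (fun y => f (y ∘ σ)) ν :=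
    (hν σ).integrable_comp_of_integrable hf
  simp_rw [symmetrize]
  rw [integral_finsetSum _ fun σ _ => hi σ]
  simp [hσ, Fintype.card_perm]

theorem PermInvariant.eq_of_forall_integral_symm_eq {m : ℕ} {ν ν₂ : Measure (Fin m → Λ)}
    [IsFiniteMeasure ν] [IsFiniteMeasure ν₂] (hν : PermInvariant ν) (hν₂ : PermInvariant ν₂)
    (h : ∀ v ∈ symmGenerators Λ m, (∃ K, ∀ y, |v y| ≤ K) → ∫ y, v y ∂ν = ∫ y, v y ∂ν₂) :
    ν = ν₂ := by
  refine Measure.ext fun E hE => (measureReal_eq_measureReal_iff).1 ?_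
  let f : (Fin m → Λ) → ℝ := E.indicator 1
  have hf : Measurable f := measurable_one.indicator hE
  have hfi (ν : Measure (Fin m → Λ)) [IsFiniteMeasure ν] : Integrable f ν :=
    (integrable_const (1 : ℝ)).indicator hE
  have hbound (y : Fin m → Λ) : |symmetrize f y| ≤ ∑ _σ : Equiv.Perm (Fin m), (1 : ℝ) := by
    refine (Finset.abs_sum_le_sum_abs _ _).trans (Finset.sum_le_sum fun σ _ => ?_)
    by_cases hy : y ∘ σ ∈ E <;> simp [f, hy]
  have hsymm := h _ (symmetrize_mem_symmGenerators hf) ⟨_, hbound⟩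
  rw [hν.integral_symmetrize (hfi ν), hν₂.integral_symmetrize (hfi ν₂)] at hsymm
  rw [← integral_indicator_one hE, ← integral_indicator_one hE]
  exact mul_left_cancel₀ (by positivity) hsymm

end PermInvariant

section MSum

lemma mSum_eq_sum_attach {Λ : Type*} (N m : ℕ) (v : (Fin m → Λ) → ℝ) (x : Fin N → Λ) :
    mSum N m v x = ∑ s ∈ (Finset.powersetCard m (Finset.univ : Finset (Fin N))).attach,
      v (x ∘ (s.1.orderEmbOfFin (Finset.mem_powersetCard.1 s.2).2).toEmbedding) := by
  rw [mSum, ← Finset.sum_attach]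
  refine Finset.sum_congr rfl fun s _ => ?_
  rw [dif_pos (Finset.mem_powersetCard.1 s.2).2]
  rfl

lemma isLinearMap_mSum {Λ : Type*} (N m : ℕ) :
    IsLinearMap ℝ (mSum N m : ((Fin m → Λ) → ℝ) → (Fin N → Λ) → ℝ) where
  map_add v w := by
    ext x
    simp only [mSum_eq_sum_attach, Pi.add_apply, Finset.sum_add_distrib]
  map_smul c v := by
    ext x
    simp only [mSum_eq_sum_attach, Pi.smul_apply, Finset.smul_sum]

lemma mSum_const {Λ : Type*} (N m : ℕ) (c : ℝ) (x : Fin N → Λ) :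
    mSum N m (fun _ => c) x = N.choose m * c := by
  simp [mSum_eq_sum_attach]

lemma mSum_comp_perm {Λ : Type*} {N m : ℕ} {v : (Fin m → Λ) → ℝ} (hv : IsSymm' m v)
    (σ : Equiv.Perm (Fin N)) (x : Fin N → Λ) : mSum N m v (x ∘ σ) = mSum N m v x := by
  have hσ := mSum_comp_eq_sum_evalFinset hv x σ.toEmbedding
  have hid := mSum_comp_eq_sum_evalFinset hv x (Function.Embedding.refl (Fin N))
  simp only [Finset.map_univ_equiv, Finset.map_refl] at hσ hid
  exact hσ.trans hid.symm

lemma exists_abs_mSum_le {Λ : Type*} (N : ℕ) {m : ℕ} {v : (Fin m → Λ) → ℝ}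
    (hv : ∃ K, ∀ y, |v y| ≤ K) : ∃ K, ∀ x, |mSum N m v x| ≤ K := by
  obtain ⟨K, hK⟩ := hv
  refine ⟨∑ _s ∈ (Finset.powersetCard m (Finset.univ : Finset (Fin N))).attach, K, fun x => ?_⟩
  rw [mSum_eq_sum_attach]
  exact (Finset.abs_sum_le_sum_abs _ _).trans (Finset.sum_le_sum fun s _ => hK _)

lemma measurable_mSum (N : ℕ) {m : ℕ} {v : (Fin m → Λ) → ℝ} (hv : Measurable v) :
    Measurable (mSum N m v) := by
  rw [funext (mSum_eq_sum_attach N m v)]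
  exact Finset.measurable_sum _ fun s _ => hv.comp (measurable_comp_right _)

variable {N m : ℕ} {Q : Measure (Fin N → Λ)}

lemma PermInvariant.integrable_mSum (hQ : PermInvariant Q)
    (h : m ≤ N) {v : (Fin m → Λ) → ℝ} (hv : Integrable v (Q.map (firstCoords h))) :
    Integrable (mSum N m v) Q := by
  rw [funext (mSum_eq_sum_attach N m v)]
  exact integrable_finsetSum _ fun s _ =>
    (hQ.measurePreserving_comp_embedding h _).integrable_comp_of_integrable hv

lemma PermInvariant.integral_mSum (hQ : PermInvariant Q)
    (h : m ≤ N) {v : (Fin m → Λ) → ℝ} (hv : Integrable v (Q.map (firstCoords h))) :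
    ∫ x, mSum N m v x ∂Q = N.choose m * ∫ y, v y ∂(Q.map (firstCoords h)) := by
  have he (e : Fin m ↪ Fin N) : ∫ x, v (x ∘ e) ∂Q = ∫ y, v y ∂(Q.map (firstCoords h)) := by
    have hmp := hQ.measurePreserving_comp_embedding h e
    rw [← hmp.map_eq, integral_map hmp.measurable.aemeasurable (by rw [hmp.map_eq]; exact hv.1)]
  have hi (e : Fin m ↪ Fin N) : Integrable (fun x => v (x ∘ e)) Q :=
    (hQ.measurePreserving_comp_embedding h e).integrable_comp_of_integrable hv
  simp_rw [mSum_eq_sum_attach]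
  rw [integral_finsetSum _ fun s _ => hi _, Finset.sum_congr rfl fun s _ => he _]
  simp

theorem PermInvariant.map_firstCoords_eq_of_forall_integral_mSum_eq {Q' : Measure (Fin N → Λ)}
    [IsFiniteMeasure Q] [IsFiniteMeasure Q'] (hQ : PermInvariant Q) (hQ' : PermInvariant Q')
    (h : m ≤ N) (hint : ∀ v ∈ symmGenerators Λ m, (∃ K, ∀ y, |v y| ≤ K) →
      ∫ x, mSum N m v x ∂Q = ∫ x, mSum N m v x ∂Q') :
    Q.map (firstCoords h) = Q'.map (firstCoords h) := by
  refine (hQ.map_firstCoords h).eq_of_forall_integral_symm_eq (hQ'.map_firstCoords h)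
    fun v hv hK => ?_
  have hvi (R : Measure (Fin m → Λ)) [IsFiniteMeasure R] : Integrable v R :=
    let ⟨_, hK⟩ := hK
    .of_bound hv.2.aestronglyMeasurable _ (.of_forall hK)
  have hchoose : (N.choose m : ℝ) ≠ 0 := mod_cast (Nat.choose_pos h).ne'
  refine mul_left_cancel₀ hchoose ?_
  rw [← hQ.integral_mSum h (hvi _), ← hQ'.integral_mSum h (hvi _), hint v hv hK]

end MSum

section Resampling

variable {ι : Type*} [DecidableEq ι]

/-- Replacing one coordinate of a `Q`-distributed point by an independent `ν`-distributed one
yields a measure dominated by `C • Q`; the domination is expressed through integrals of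
nonnegative functions. -/
def ResamplingBound (Q : Measure (ι → Λ)) (ν : Measure Λ) (C : ℝ≥0∞) : Prop :=
  ∀ j, ∀ F : (ι → Λ) → ℝ≥0∞, Measurable F →
    ∫⁻ x, ∫⁻ s, F (Function.update x j s) ∂ν ∂Q ≤ C * ∫⁻ x, F x ∂Q

lemma ResamplingBound.of_permInvariant {Q : Measure (ι → Λ)} (hQ : PermInvariant Q)
    {ν : Measure Λ} [SFinite ν] {C : ℝ≥0∞} (k : ι)
    (h : ∀ F : (ι → Λ) → ℝ≥0∞, Measurable F →
      ∫⁻ x, ∫⁻ s, F (Function.update x k s) ∂ν ∂Q ≤ C * ∫⁻ x, F x ∂Q) :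
    ResamplingBound Q ν C := by
  intro j F hF
  have hmeas : Measurable fun x : ι → Λ => ∫⁻ s, F (Function.update x j s) ∂ν :=
    (hF.comp measurable_update').lintegral_prod_right'
      (f := fun q : (ι → Λ) × Λ => F (Function.update q.1 j q.2))
  have hupdate (x : ι → Λ) (s : Λ) : Function.update (x ∘ Equiv.swap j k) j s =
      Function.update x k s ∘ Equiv.swap j k := by
    rw [Function.update_comp_equiv, Equiv.symm_swap, Equiv.swap_apply_right]
  rw [← (hQ (Equiv.swap j k)).lintegral_comp hmeas, ← (hQ (Equiv.swap j k)).lintegral_comp hF]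
  simp_rw [hupdate]
  exact h _ (hF.comp (measurable_comp_right (Equiv.swap j k)))

lemma ResamplingBound.lintegral_lmarginal_le {Q : Measure (ι → Λ)} {ν : Measure Λ}
    [SigmaFinite ν] {C : ℝ≥0∞} (h : ResamplingBound Q ν C) {F : (ι → Λ) → ℝ≥0∞}
    (hF : Measurable F) (J : Finset ι) :
    ∫⁻ x, lmarginal (fun _ => ν) J F x ∂Q ≤ C ^ J.card * ∫⁻ x, F x ∂Q := by
  induction J using Finset.induction_on with
  | empty => simp
  | insert j J hj ih =>
    calc ∫⁻ x, lmarginal (fun _ => ν) (insert j J) F x ∂Q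
        = ∫⁻ x, ∫⁻ s, lmarginal (fun _ => ν) J F (Function.update x j s) ∂ν ∂Q :=
          lintegral_congr fun x => lmarginal_insert (μ := fun _ => ν) F hF hj x
      _ ≤ C * ∫⁻ x, lmarginal (fun _ => ν) J F x ∂Q := h j _ (hF.lmarginal fun _ => ν)
      _ ≤ C * (C ^ J.card * ∫⁻ x, F x ∂Q) := by gcongr
      _ = C ^ (insert j J).card * ∫⁻ x, F x ∂Q := by
        rw [Finset.card_insert_of_notMem hj, pow_succ', mul_assoc]

lemma measurable_piecewise_comp (A : Finset ι) (τ : Equiv.Perm ι) :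
    Measurable fun q : (ι → Λ) × (ι → Λ) => A.piecewise q.1 (q.2 ∘ τ) := by
  refine measurable_pi_lambda _ fun i => ?_
  by_cases hi : i ∈ A
  · simp only [Finset.piecewise_eq_of_mem _ _ _ hi]
    fun_prop
  · simp only [Finset.piecewise_eq_of_notMem _ _ _ hi, Function.comp_apply]
    fun_prop

variable [Fintype ι]

lemma lintegral_piecewise_comp_perm (ν : Measure Λ) [IsProbabilityMeasure ν]
    {F : (ι → Λ) → ℝ≥0∞} (hF : Measurable F) (A : Finset ι) (τ : Equiv.Perm ι) (x : ι → Λ) :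
    ∫⁻ t, F (A.piecewise x (t ∘ τ)) ∂(Measure.pi fun _ => ν) =
      lmarginal (fun _ => ν) Aᶜ F x := by
  have hFA : Measurable fun t : (Aᶜ : Finset ι) → Λ => F (Function.updateFinset x Aᶜ t) :=
    hF.comp measurable_updateFinset
  have hpiece (t : ι → Λ) :
      A.piecewise x t = Function.updateFinset x Aᶜ (Finset.restrict Aᶜ t) := by
    ext i
    by_cases hi : i ∈ A <;> simp [Function.updateFinset, hi]
  simp_rw [hpiece]
  rw [lmarginal, ← lintegral_restrict_infinitePi (μ := fun _ : ι => ν) hFA,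
    Measure.infinitePi_eq_pi]
  exact (measurePreserving_pi_comp_equiv ν τ).lintegral_comp
    (hFA.comp (Finset.measurable_restrict _))

theorem ResamplingBound.map_piecewise_le {Q : Measure (ι → Λ)} {ν : Measure Λ}
    [IsProbabilityMeasure ν] {C : ℝ≥0∞} (h : ResamplingBound Q ν C) (A : Finset ι)
    (τ : Equiv.Perm ι) :
    (Q.prod (Measure.pi fun _ => ν)).map (fun q => A.piecewise q.1 (q.2 ∘ τ)) ≤
      C ^ Aᶜ.card • Q := by
  have hmeas := measurable_piecewise_comp (Λ := Λ) A τ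
  refine Measure.le_iff.2 fun E hE => ?_
  have hF : Measurable (E.indicator (1 : (ι → Λ) → ℝ≥0∞)) := measurable_one.indicator hE
  rw [← lintegral_indicator_one hE, lintegral_map hF hmeas,
    lintegral_prod (fun q => E.indicator 1 (A.piecewise q.1 (q.2 ∘ τ)))
      (hF.comp hmeas).aemeasurable, Measure.smul_apply, smul_eq_mul,
    ← lintegral_indicator_one hE]
  simp_rw [lintegral_piecewise_comp_perm ν hF]
  exact h.lintegral_lmarginal_le hF Aᶜ

lemma ResamplingBound.ae_piecewise {Q : Measure (ι → Λ)} {ν : Measure Λ}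
    [IsProbabilityMeasure ν] {C : ℝ≥0∞} (h : ResamplingBound Q ν C) {p : (ι → Λ) → Prop}
    (hp : ∀ᵐ x ∂Q, p x) (A : Finset ι) (τ : Equiv.Perm ι) :
    ∀ᵐ q ∂(Q.prod (Measure.pi fun _ => ν)), p (A.piecewise q.1 (q.2 ∘ τ)) :=
  ae_of_ae_map (measurable_piecewise_comp A τ).aemeasurable <|
    ((Measure.absolutelyContinuous_of_le (h.map_piecewise_le A τ)).trans
      Measure.smul_absolutelyContinuous).ae_le hp

end Resampling

section GeneratorRecovery

variable {N m : ℕ} {Q : Measure (Fin N → Λ)} {ν : Measure Λ} [IsProbabilityMeasure ν]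
  {C : ℝ≥0∞}

theorem ResamplingBound.integrable_generator [SFinite Q] (h : ResamplingBound Q ν C)
    (hC : C ≠ ∞) (hmN : m ≤ N) {v : (Fin m → Λ) → ℝ} (hv : v ∈ symmGenerators Λ m)
    (hi : Integrable (mSum N m v) Q) : Integrable v (Q.map (firstCoords hmN)) := by
  obtain ⟨c, hc⟩ := exists_coeff_firstCoords_eq_sum_mSum (Λ := Λ) hmN
  have hterm (p : Finset (Fin N) × Equiv.Perm (Fin N)) :
      Integrable (fun q : (Fin N → Λ) × (Fin N → Λ) => mSum N m v (p.1.piecewise q.1 (q.2 ∘ p.2)))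
        (Q.prod (Measure.pi fun _ => ν)) :=
    ((hi.smul_measure (ENNReal.pow_ne_top hC)).mono_measure
      (h.map_piecewise_le p.1 p.2)).comp_measurable (measurable_piecewise_comp _ _)
  have hprod : Integrable (fun q : (Fin N → Λ) × (Fin N → Λ) => v (firstCoords hmN q.1))
      (Q.prod (Measure.pi fun _ => ν)) :=
    (integrable_finsetSum Finset.univ fun p _ => (hterm p).const_mul (c p)).congr
      (.of_forall fun q => (hc v hv.1 q.1 q.2).symm)
  rw [integrable_map_measure hv.2.aestronglyMeasurable (measurable_firstCoords hmN).aemeasurable]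
  exact (measurePreserving_fst.integrable_comp
    (hv.2.comp (measurable_firstCoords hmN)).aestronglyMeasurable).1 hprod

theorem ResamplingBound.exists_generator_ae_eq_const (h : ResamplingBound Q ν C)
    (hmN : m ≤ N) {v : (Fin m → Λ) → ℝ} (hv : IsSymm' m v) {a : ℝ}
    (ha : ∀ᵐ x ∂Q, mSum N m v x = a) : ∃ b : ℝ, ∀ᵐ x ∂Q, v (firstCoords hmN x) = b := by
  obtain ⟨c, hc⟩ := exists_coeff_firstCoords_eq_sum_mSum (Λ := Λ) hmN
  have hprod : ∀ᵐ q ∂(Q.prod (Measure.pi fun _ : Fin N => ν)),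
      v (firstCoords hmN q.1) = ∑ p, c p * a := by
    filter_upwards [ae_all_iff.2 fun p : Finset (Fin N) × Equiv.Perm (Fin N) =>
      h.ae_piecewise ha p.1 p.2] with q hq
    simp_rw [hc v hv q.1 q.2, hq]
  exact ⟨∑ p, c p * a, (Measure.ae_ae_of_ae_prod hprod).mono fun x hx => eventually_const.1 hx⟩

lemma ResamplingBound.ae_exists_tendsto_generator (h : ResamplingBound Q ν C) (hmN : m ≤ N)
    {v : ℕ → (Fin m → Λ) → ℝ} (hv : ∀ n, IsSymm' m (v n))
    (hlim : ∀ᵐ x ∂Q, ∃ l, Tendsto (fun n => mSum N m (v n) x) atTop (nhds l)) :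
    ∀ᵐ x ∂Q, ∃ l, Tendsto (fun n => v n (firstCoords hmN x)) atTop (nhds l) := by
  obtain ⟨c, hc⟩ := exists_coeff_firstCoords_eq_sum_mSum (Λ := Λ) hmN
  have hprod : ∀ᵐ q ∂(Q.prod (Measure.pi fun _ : Fin N => ν)),
      ∃ l, Tendsto (fun n => v n (firstCoords hmN q.1)) atTop (nhds l) := by
    filter_upwards [ae_all_iff.2 fun p : Finset (Fin N) × Equiv.Perm (Fin N) =>
      h.ae_piecewise hlim p.1 p.2] with q hq
    choose l hl using hq
    refine ⟨∑ p, c p * l p, ?_⟩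
    simp_rw [fun n => hc (v n) (hv n) q.1 q.2]
    exact tendsto_finsetSum _ fun p _ => (hl p).const_mul (c p)
  exact (Measure.ae_ae_of_ae_prod hprod).mono fun x hx => eventually_const.1 hx

theorem ResamplingBound.exists_limit_generator (h : ResamplingBound Q ν C)
    (hQ : PermInvariant Q) (hmN : m ≤ N) {v : ℕ → (Fin m → Λ) → ℝ}
    (hv : ∀ n, v n ∈ symmGenerators Λ m)
    (hlim : ∀ᵐ x ∂Q, ∃ l, Tendsto (fun n => mSum N m (v n) x) atTop (nhds l)) :
    ∃ u ∈ symmGenerators Λ m,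
      ∀ᵐ x ∂Q, Tendsto (fun n => mSum N m (v n) x) atTop (nhds (mSum N m u x)) := by
  have hgen := h.ae_exists_tendsto_generator hmN (fun n => (hv n).1) hlim
  let u : (Fin m → Λ) → ℝ := fun y => limUnder atTop fun n => v n y
  refine ⟨u, ⟨fun σ y => ?_, ?_⟩, ?_⟩
  · simp only [u, (hv _).1 σ y]
  · exact (StronglyMeasurable.limUnder fun n => (hv n).2.stronglyMeasurable).measurable
  · have hall (e : Fin m ↪ Fin N) :
        ∀ᵐ x ∂Q, Tendsto (fun n => v n (x ∘ e)) atTop (nhds (u (x ∘ e))) := by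
      obtain ⟨σ, hσ⟩ := exists_perm_firstCoords_comp_eq (Λ := Λ) hmN e
      filter_upwards [(hQ σ).quasiMeasurePreserving.ae hgen] with x hx
      simpa only [hσ] using tendsto_nhds_limUnder hx
    filter_upwards [ae_all_iff.2 hall] with x hx
    simp only [mSum_eq_sum_attach]
    exact tendsto_finsetSum _ fun s _ => hx _

end GeneratorRecovery

section UniformBound

variable {α : Type*} [MeasurableSpace α] {κ : Measure α} [SFinite κ] {μ : Measure Λ}
  {r : α → ℝ≥0∞} {f G : α × Λ → ℝ≥0∞} {B : Set Λ}

lemma exists_subset_forall_ae_le_natCast_mul [SigmaFinite μ] (hr : Measurable r)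
    (hf : Measurable f) (hB : MeasurableSet B) (hBpos : 0 < μ B)
    (h : ∀ᵐ t ∂μ, t ∈ B → ∃ K : NNReal, ∀ᵐ y ∂κ, r y ≤ K * f (y, t)) :
    ∃ n : ℕ, ∃ B', MeasurableSet B' ∧ 0 < μ B' ∧ μ B' < ∞ ∧
      ∀ t ∈ B', ∀ᵐ y ∂κ, r y ≤ n * f (y, t) := by
  let E (n : ℕ) : Set Λ := {t | ∀ᵐ y ∂κ, r y ≤ n * f (y, t)}
  have hE (n : ℕ) : MeasurableSet (E n) := by
    have hs : MeasurableSet {q : α × Λ | ¬r q.1 ≤ n * f q} :=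
      (measurableSet_le (hr.comp measurable_fst) (hf.const_mul _)).compl
    exact measurable_measure_prodMk_right (μ := κ) hs (measurableSet_singleton 0)
  have hcover : B ≤ᵐ[μ] ⋃ n, B ∩ E n := by
    filter_upwards [h] with t ht htB
    obtain ⟨K, hK⟩ := ht htB
    obtain ⟨n, hn⟩ := exists_nat_ge K
    refine Set.mem_iUnion.2 ⟨n, htB, hK.mono fun y hy => hy.trans ?_⟩
    gcongr
    exact_mod_cast hn
  obtain ⟨n, hn⟩ : ∃ n, 0 < μ (B ∩ E n) := by
    by_contra! hnull
    exact (hBpos.trans_le (measure_mono_ae hcover)).ne'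
      (measure_iUnion_null fun n => le_antisymm (hnull n) zero_le)
  obtain ⟨B', hB', hsub, hpos, hfin⟩ := Measure.exists_subset_measure_lt_top (hB.inter (hE n)) hn
  exact ⟨n, B', hB', hpos, hfin, fun t ht => (hsub ht).2⟩

lemma lintegral_mul_setLIntegral_le [SFinite μ] {K : ℝ≥0∞} (hr : Measurable r)
    (hf : Measurable f) (hG : Measurable G) (hB : MeasurableSet B)
    (h : ∀ t ∈ B, ∀ᵐ y ∂κ, r y ≤ K * f (y, t)) :
    ∫⁻ y, r y * ∫⁻ t in B, G (y, t) ∂μ ∂κ ≤ K * ∫⁻ q, f q * G q ∂(κ.prod μ) := by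
  have hfG : Measurable fun q => f q * G q := hf.mul hG
  calc ∫⁻ y, r y * ∫⁻ t in B, G (y, t) ∂μ ∂κ
      = ∫⁻ y, ∫⁻ t in B, r y * G (y, t) ∂μ ∂κ :=
        lintegral_congr fun y => (lintegral_const_mul _ (hG.comp measurable_prodMk_left)).symm
    _ = ∫⁻ t in B, ∫⁻ y, r y * G (y, t) ∂κ ∂μ :=
        lintegral_lintegral_swap ((hr.comp measurable_fst).mul hG).aemeasurable
    _ ≤ ∫⁻ t in B, ∫⁻ y, K * (f (y, t) * G (y, t)) ∂κ ∂μ := by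
        refine setLIntegral_mono' hB fun t ht => lintegral_mono_ae ?_
        filter_upwards [h t ht] with y hy
        rw [← mul_assoc]
        gcongr
    _ ≤ ∫⁻ t, ∫⁻ y, K * (f (y, t) * G (y, t)) ∂κ ∂μ := setLIntegral_le_lintegral _ _
    _ = K * ∫⁻ q, f q * G q ∂(κ.prod μ) := by
        rw [← lintegral_const_mul _ hfG, lintegral_prod_symm' _ (hfG.const_mul K)]

end UniformBound

section ResamplingExistence

lemma glueLast_eq_update {Λ : Type*} {N : ℕ} (h : 1 ≤ N) (x : Fin N → Λ) (s : Λ) :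
    glueLast h (firstCoords (Nat.sub_le N 1) x) s =
      Function.update x ⟨N - 1, by omega⟩ s := by
  obtain ⟨n, rfl⟩ := Nat.exists_eq_add_of_le' h
  change Fin.snoc (α := fun _ => Λ) (Fin.init x) s = Function.update x (Fin.last n) s
  rw [← Fin.update_snoc_last, Fin.snoc_init_self]

theorem exists_resamplingBound_withDensity (μ : Measure Λ) [SigmaFinite μ] {N : ℕ} (h : 1 ≤ N)
    {p : (Fin N → Λ) → ℝ≥0∞} (hp : Measurable p) (hinv : PermInvariant ((pm μ N).withDensity p))
    {r : (Fin (N - 1) → Λ) → ℝ≥0∞} (hr : Measurable r)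
    (hmap : ((pm μ N).withDensity p).map (firstCoords (Nat.sub_le N 1)) =
      (pm μ (N - 1)).withDensity r)
    {B : Set Λ} (hB : MeasurableSet B) (hBpos : 0 < μ B)
    (hbound : ∀ᵐ t ∂μ, t ∈ B →
      ∃ K : NNReal, ∀ᵐ y ∂(pm μ (N - 1)), r y ≤ K * p (glueLast h y t)) :
    ∃ (ν : Measure Λ) (C : ℝ≥0∞), IsProbabilityMeasure ν ∧ C ≠ ∞ ∧
      ResamplingBound ((pm μ N).withDensity p) ν C := by
  have hglue := measurePreserving_glueLast μ h
  have hpg : Measurable fun q : (Fin (N - 1) → Λ) × Λ => p (glueLast h q.1 q.2) :=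
    hp.comp hglue.measurable
  obtain ⟨n, B', hB', hpos, hfin, hle⟩ :=
    exists_subset_forall_ae_le_natCast_mul hr hpg hB hBpos hbound
  have hinvB : (μ B')⁻¹ ≠ ∞ := ENNReal.inv_ne_top.2 hpos.ne'
  refine ⟨(μ B')⁻¹ • μ.restrict B', (μ B')⁻¹ * n,
    ⟨by simp [ENNReal.inv_mul_cancel hpos.ne' hfin.ne]⟩,
    ENNReal.mul_ne_top hinvB (ENNReal.natCast_ne_top n),
    .of_permInvariant hinv ⟨N - 1, by omega⟩ fun F hF => ?_⟩
  have hFg : Measurable fun q : (Fin (N - 1) → Λ) × Λ => F (glueLast h q.1 q.2) :=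
    hF.comp hglue.measurable
  have hinner : Measurable fun y => ∫⁻ s in B', F (glueLast h y s) ∂μ :=
    hFg.lintegral_prod_right'
  simp only [lintegral_smul_measure, smul_eq_mul, ← glueLast_eq_update h]
  rw [lintegral_const_mul' _ _ hinvB, mul_assoc, ← lintegral_map hinner (measurable_firstCoords _),
    hmap, lintegral_withDensity_eq_lintegral_mul _ hr hinner,
    lintegral_withDensity_eq_lintegral_mul _ hp hF, ← hglue.lintegral_comp (hp.mul hF)]
  gcongr
  exact lintegral_mul_setLIntegral_le hr hpg hFg hB' hle

end ResamplingExistence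

section GibbsMeasures

lemma PermInvariant.tilted {ι : Type*} {Q : Measure (ι → Λ)} (hQ : PermInvariant Q)
    {f : (ι → Λ) → ℝ} (hf : Measurable f)
    (hs : ∀ σ : Equiv.Perm ι, ∀ᵐ x ∂Q, f (x ∘ σ) = f x) : PermInvariant (Q.tilted f) :=
  hQ.withDensity (by fun_prop) fun σ => (hs σ).mono fun x hx => by rw [hx]

/-- The exponents of the Gibbs densities `e^{-V-H}` with `V` an `m`-sum, for a fixed `H`. -/
def gibbsExponents (N m : ℕ) (H : (Fin N → Λ) → ℝ) : Set ((Fin N → Λ) → ℝ) :=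
  {f | ∃ v ∈ symmGenerators Λ m, f = fun x => -mSum N m v x - H x}

variable {N m : ℕ} {H : (Fin N → Λ) → ℝ} {f g : (Fin N → Λ) → ℝ}

lemma add_mSum_mem_gibbsExponents {v : (Fin m → Λ) → ℝ} (hf : f ∈ gibbsExponents N m H)
    (hv : v ∈ symmGenerators Λ m) : (fun x => f x + mSum N m v x) ∈ gibbsExponents N m H := by
  obtain ⟨u, hu, rfl⟩ := hf
  refine ⟨u - v, sub_mem hu hv, ?_⟩
  rw [(isLinearMap_mSum N m).map_sub]
  ext x
  simp only [Pi.sub_apply]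
  ring

lemma measurable_of_mem_gibbsExponents (hH : Measurable H) (hf : f ∈ gibbsExponents N m H) :
    Measurable f := by
  obtain ⟨v, hv, rfl⟩ := hf
  exact (measurable_mSum N hv.2).neg.sub hH

lemma comp_perm_ae_eq_of_mem_gibbsExponents {Q : Measure (Fin N → Λ)}
    (hHs : ∀ σ : Equiv.Perm (Fin N), ∀ᵐ x ∂Q, H (x ∘ σ) = H x) (hf : f ∈ gibbsExponents N m H)
    (σ : Equiv.Perm (Fin N)) : ∀ᵐ x ∂Q, f (x ∘ σ) = f x := by
  obtain ⟨v, hv, rfl⟩ := hf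
  filter_upwards [hHs σ] with x hx
  rw [mSum_comp_perm hv.1, hx]

lemma add_const_mem_gibbsExponents (h : m ≤ N) (hf : f ∈ gibbsExponents N m H) (c : ℝ) :
    (fun x => f x + c) ∈ gibbsExponents N m H := by
  have hchoose : (N.choose m : ℝ) ≠ 0 := mod_cast (Nat.choose_pos h).ne'
  have hadd := add_mSum_mem_gibbsExponents hf (const_mem_symmGenerators m (c / N.choose m))
  simpa only [mSum_const, mul_div_cancel₀ _ hchoose] using hadd

lemma midpoint_mem_gibbsExponents (hf : f ∈ gibbsExponents N m H)
    (hg : g ∈ gibbsExponents N m H) : (fun x => (f x + g x) / 2) ∈ gibbsExponents N m H := by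
  obtain ⟨u, hu, rfl⟩ := hf
  obtain ⟨v, hv, rfl⟩ := hg
  refine ⟨(2 : ℝ)⁻¹ • (u + v), Submodule.smul_mem _ _ (add_mem hu hv), ?_⟩
  rw [(isLinearMap_mSum N m).map_smul, (isLinearMap_mSum N m).map_add]
  ext x
  simp only [Pi.smul_apply, Pi.add_apply, smul_eq_mul]
  ring

variable {Q : Measure (Fin N → Λ)} {ν : Measure Λ} [IsProbabilityMeasure ν] {C : ℝ≥0∞}

lemma ResamplingBound.exists_tendsto_mem_gibbsExponents (h : ResamplingBound Q ν C)
    (hQ : PermInvariant Q) (hmN : m ≤ N) {f : ℕ → (Fin N → Λ) → ℝ}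
    (hf : ∀ n, f n ∈ gibbsExponents N m H)
    (hlim : ∀ᵐ x ∂Q, ∃ l, Tendsto (fun n => f n x) atTop (nhds l)) :
    ∃ g ∈ gibbsExponents N m H, ∀ᵐ x ∂Q, Tendsto (fun n => f n x) atTop (nhds (g x)) := by
  choose v hv hfv using hf
  obtain rfl : f = fun n x => -mSum N m (v n) x - H x := funext hfv
  obtain ⟨u, hu, htend⟩ := h.exists_limit_generator hQ hmN hv <| hlim.mono fun x ⟨l, hl⟩ =>
    ⟨-(l + H x), by simpa using (hl.add_const (H x)).neg⟩
  exact ⟨_, ⟨u, hu, rfl⟩, htend.mono fun x hx => hx.neg.sub_const _⟩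

theorem ResamplingBound.exists_map_firstCoords_tilted_eq [IsProbabilityMeasure Q]
    (h : ResamplingBound Q ν C) (hQ : PermInvariant Q) (hmN : m ≤ N) (hH : Measurable H)
    (hHs : ∀ σ : Equiv.Perm (Fin N), ∀ᵐ x ∂Q, H (x ∘ σ) = H x)
    (hne : (gibbsExponents N m H ∩ jensenDomain Q).Nonempty) :
    ∃ u ∈ symmGenerators Λ m, (fun x => -mSum N m u x - H x) ∈ jensenDomain Q ∧
      (Q.tilted fun x => -mSum N m u x - H x).map (firstCoords hmN) = Q.map (firstCoords hmN) := by
  obtain ⟨_, ⟨⟨u, hu, rfl⟩, hdom⟩, hmin⟩ := exists_isMinOn_jensenGap hne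
    (fun _ => add_const_mem_gibbsExponents hmN)
    (fun _ hf _ => midpoint_mem_gibbsExponents hf)
    (fun _ => h.exists_tendsto_mem_gibbsExponents hQ hmN)
  have hu_mem : (fun x => -mSum N m u x - H x) ∈ gibbsExponents N m H := ⟨u, hu, rfl⟩
  have := isProbabilityMeasure_tilted hdom.2
  refine ⟨u, hu, hdom, PermInvariant.map_firstCoords_eq_of_forall_integral_mSum_eq
    (hQ.tilted (measurable_of_mem_gibbsExponents hH hu_mem)
      (comp_perm_ae_eq_of_mem_gibbsExponents hHs hu_mem)) hQ hmN fun w hw hwK => ?_⟩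
  obtain ⟨K, hK⟩ := exists_abs_mSum_le N hwK
  refine integral_tilted_eq_of_isMinOn_jensenGap ⟨hu_mem, hdom⟩ hmin (measurable_mSum N hw.2) hK
    fun t => ?_
  have hadd := add_mSum_mem_gibbsExponents hu_mem (Submodule.smul_mem _ t hw)
  simpa only [(isLinearMap_mSum N m).map_smul, Pi.smul_apply, smul_eq_mul] using hadd

theorem PermInvariant.exists_mSum_sub_ae_eq_const (hQ : PermInvariant Q) (hmN : m ≤ N)
    (hH : Measurable H) (hHs : ∀ σ : Equiv.Perm (Fin N), ∀ᵐ x ∂Q, H (x ∘ σ) = H x)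
    {R : Measure (Fin m → Λ)} {u₀ u₁ : (Fin m → Λ) → ℝ} (hu₀ : u₀ ∈ symmGenerators Λ m)
    (hu₁ : u₁ ∈ symmGenerators Λ m) (hi₀ : Integrable u₀ R) (hi₁ : Integrable u₁ R)
    (he₀ : Integrable (fun x => exp (-mSum N m u₀ x - H x)) Q)
    (he₁ : Integrable (fun x => exp (-mSum N m u₁ x - H x)) Q)
    (hmap₀ : (Q.tilted fun x => -mSum N m u₀ x - H x).map (firstCoords hmN) = R)
    (hmap₁ : (Q.tilted fun x => -mSum N m u₁ x - H x).map (firstCoords hmN) = R) :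
    ∃ c : ℝ, ∀ᵐ x ∂Q, mSum N m (u₁ - u₀) x = c := by
  have hsub (x : Fin N → Λ) :
      (-mSum N m u₀ x - H x) - (-mSum N m u₁ x - H x) = mSum N m (u₁ - u₀) x := by
    rw [(isLinearMap_mSum N m).map_sub, Pi.sub_apply]
    ring
  have hinv {u : (Fin m → Λ) → ℝ} (hu : u ∈ symmGenerators Λ m) :
      PermInvariant (Q.tilted fun x => -mSum N m u x - H x) :=
    hQ.tilted (measurable_of_mem_gibbsExponents hH ⟨u, hu, rfl⟩)
      (comp_perm_ae_eq_of_mem_gibbsExponents hHs ⟨u, hu, rfl⟩)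
  have hR := hi₁.sub hi₀
  have hR₀ := hR
  have hR₁ := hR
  rw [← hmap₀] at hR₀
  rw [← hmap₁] at hR₁
  obtain ⟨c, hc⟩ := exists_sub_ae_eq_const_of_integral_tilted_eq he₀ he₁
    (by simpa only [hsub] using (hinv hu₀).integrable_mSum hmN hR₀)
    (by simpa only [hsub] using (hinv hu₁).integrable_mSum hmN hR₁)
    (by simp_rw [hsub]
        rw [(hinv hu₀).integral_mSum hmN hR₀, (hinv hu₁).integral_mSum hmN hR₁, hmap₀, hmap₁])
  exact ⟨c, hc.mono fun x hx => (hsub x).symm.trans hx⟩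

end GibbsMeasures

section Reductions

variable {μ : Measure Λ} {N m : ℕ}

lemma rhoU_eq_rho (h : m ≤ N) {W U : (Fin N → Λ) → ℝ}
    (he : Integrable (fun x => exp (-U x - W x)) (pm μ N)) :
    rhoU μ N m h W U =
      rho μ N m h fun x => exp (-U x - W x) / ∫ x, exp (-U x - W x) ∂(pm μ N) := by
  have hZ : Zfun μ N W U = ∫ x, exp (-U x - W x) ∂(pm μ N) :=
    (integral_eq_lintegral_of_nonneg_ae (.of_forall fun x => (exp_pos _).le) he.1).symm
  ext y
  simp only [rhoU, rho, hZ, integral_div, neg_sub_comm]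

lemma integrable_exp_neg_Wmeas_iff {W : (Fin N → Λ) → ℝ} (hW : Measurable W)
    (V : (Fin N → Λ) → ℝ) :
    Integrable (fun x => exp (-V x)) (Wmeas μ N W) ↔
      Integrable (fun x => exp (-V x - W x)) (pm μ N) := by
  rw [Wmeas, integrable_withDensity_iff_integrable_smul' (by fun_prop)
    (.of_forall fun _ => ENNReal.ofReal_lt_top)]
  refine integrable_congr (.of_forall fun x => ?_)
  simp only [smul_eq_mul]
  rw [ENNReal.toReal_ofReal (exp_pos _).le, ← exp_add, add_comm, ← sub_eq_add_neg]

variable [SigmaFinite μ]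

lemma ae_of_ae_firstCoords [NeZero (pm μ N)] (h : m ≤ N) {p : (Fin m → Λ) → Prop}
    (hp : ∀ᵐ x ∂(pm μ N), p (firstCoords h x)) : ∀ᵐ y ∂(pm μ m), p y := by
  have hglue := measurePreserving_glue μ h
  have : NeZero (pm μ (N - m)) := ⟨fun h0 => NeZero.ne (pm μ N) <| by
    rw [← hglue.map_eq, h0, Measure.prod_zero, Measure.map_zero]⟩
  have hprod := hglue.quasiMeasurePreserving.ae hp
  simp only [firstCoords_glue] at hprod
  exact (Measure.ae_ae_of_ae_prod hprod).mono fun y hy => eventually_const.1 hy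

lemma measurable_rho (h : m ≤ N) {p : (Fin N → Λ) → ℝ} (hp : Measurable p) :
    Measurable (rho μ N m h p) :=
  (StronglyMeasurable.integral_prod_right (f := fun y z => p (glue h y z))
    (hp.comp (measurePreserving_glue μ h).measurable).stronglyMeasurable).measurable

lemma rho_nonneg_ae (h : m ≤ N) {p : (Fin N → Λ) → ℝ} (hp : 0 ≤ᵐ[pm μ N] p) :
    0 ≤ᵐ[pm μ m] rho μ N m h p := by
  have hprod := (measurePreserving_glue μ h).quasiMeasurePreserving.ae hp
  filter_upwards [Measure.ae_ae_of_ae_prod hprod] with y hy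
  exact integral_nonneg_of_ae hy

lemma rho_congr_ae (h : m ≤ N) {p q : (Fin N → Λ) → ℝ} (hpq : p =ᵐ[pm μ N] q) :
    rho μ N m h p =ᵐ[pm μ m] rho μ N m h q := by
  have hprod := (measurePreserving_glue μ h).quasiMeasurePreserving.ae hpq
  filter_upwards [Measure.ae_ae_of_ae_prod hprod] with y hy
  exact integral_congr_ae hy

lemma rhomeas_eq_iff (h : m ≤ N) {p q : (Fin N → Λ) → ℝ} (hp : Measurable p) (hq : Measurable q)
    (hp0 : 0 ≤ᵐ[pm μ N] p) (hq0 : 0 ≤ᵐ[pm μ N] q) :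
    rhomeas μ N m h p = rhomeas μ N m h q ↔ rho μ N m h p =ᵐ[pm μ m] rho μ N m h q := by
  rw [rhomeas, rhomeas,
    withDensity_eq_iff_of_sigmaFinite (measurable_rho h hp).ennreal_ofReal.aemeasurable
      (measurable_rho h hq).ennreal_ofReal.aemeasurable]
  refine eventually_congr ?_
  filter_upwards [rho_nonneg_ae h hp0, rho_nonneg_ae h hq0] with y hpy hqy
  exact ENNReal.ofReal_eq_ofReal_iff hpy hqy

end Reductions

section SymmDensity

/-- A symmetric, almost everywhere positive probability density on `Λ^N`, as the reference
state `P` is assumed to be. -/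
structure IsSymmDensity (μ : Measure Λ) (N : ℕ) (P : (Fin N → Λ) → ℝ) : Prop where
  measurable : Measurable P
  lintegral_eq_one : ∫⁻ x, ENNReal.ofReal (P x) ∂(pm μ N) = 1
  pos : ∀ᵐ x ∂(pm μ N), 0 < P x
  symm : ∀ σ : Equiv.Perm (Fin N), ∀ᵐ x ∂(pm μ N), P (x ∘ σ) = P x

namespace IsSymmDensity

variable {μ : Measure Λ} {N m : ℕ} {P : (Fin N → Λ) → ℝ}

lemma nonneg (hP : IsSymmDensity μ N P) : 0 ≤ᵐ[pm μ N] P :=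
  hP.pos.mono fun _ hx => hx.le

lemma integrable (hP : IsSymmDensity μ N P) : Integrable P (pm μ N) :=
  ⟨hP.measurable.aestronglyMeasurable, by
    rw [hasFiniteIntegral_iff_ofReal hP.nonneg, hP.lintegral_eq_one]
    exact ENNReal.one_lt_top⟩

lemma isProbabilityMeasure (hP : IsSymmDensity μ N P) :
    IsProbabilityMeasure (Pmeas μ N P) :=
  ⟨by rw [Pmeas, withDensity_apply _ .univ, setLIntegral_univ, hP.lintegral_eq_one]⟩

lemma pm_absolutelyContinuous (hP : IsSymmDensity μ N P) :
    pm μ N ≪ Pmeas μ N P :=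
  withDensity_absolutelyContinuous' hP.measurable.ennreal_ofReal.aemeasurable
    (hP.pos.mono fun _ hx => (ENNReal.ofReal_pos.2 hx).ne')

lemma neZero_pm (hP : IsSymmDensity μ N P) : NeZero (pm μ N) :=
  ⟨fun h0 => by simpa [h0] using hP.lintegral_eq_one⟩

lemma Pmeas_eq_tilted (hP : IsSymmDensity μ N P) :
    Pmeas μ N P = (pm μ N).tilted fun x => log (P x) := by
  have hexp : (fun x => exp (log (P x))) =ᵐ[pm μ N] P := hP.pos.mono fun x hx => exp_log hx
  have hint : ∫ x, exp (log (P x)) ∂(pm μ N) = 1 := by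
    rw [integral_congr_ae hexp, integral_eq_lintegral_of_nonneg_ae hP.nonneg hP.integrable.1,
      hP.lintegral_eq_one, ENNReal.toReal_one]
  refine withDensity_congr_ae (hexp.mono fun x hx => ?_)
  simp only [hint, div_one, hx]

lemma integrable_exp_log (hP : IsSymmDensity μ N P) :
    Integrable (fun x => exp (log (P x))) (pm μ N) :=
  hP.integrable.congr (hP.pos.mono fun _ hx => (exp_log hx).symm)

lemma Pmeas_tilted (hP : IsSymmDensity μ N P) (U W : (Fin N → Λ) → ℝ) :
    (Pmeas μ N P).tilted (fun x => -U x - (W x + log (P x))) =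
      (pm μ N).tilted fun x => -U x - W x := by
  rw [hP.Pmeas_eq_tilted, tilted_tilted hP.integrable_exp_log]
  congr 1
  ext x
  simp only [Pi.add_apply]
  ring

lemma integrable_exp_Pmeas_iff (hP : IsSymmDensity μ N P) (U W : (Fin N → Λ) → ℝ) :
    Integrable (fun x => exp (-U x - (W x + log (P x)))) (Pmeas μ N P) ↔
      Integrable (fun x => exp (-U x - W x)) (pm μ N) := by
  rw [hP.Pmeas_eq_tilted, integrable_tilted_iff hP.integrable_exp_log]
  refine integrable_congr (.of_forall fun x => ?_)
  simp only [smul_eq_mul, ← exp_add]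
  ring_nf

variable [SigmaFinite μ]

lemma permInvariant (hP : IsSymmDensity μ N P) : PermInvariant (Pmeas μ N P) :=
  (permInvariant_pm μ N).withDensity hP.measurable.ennreal_ofReal fun σ =>
    (hP.symm σ).mono fun x hx => by rw [hx]

lemma map_firstCoords (hP : IsSymmDensity μ N P) (h : m ≤ N) :
    (Pmeas μ N P).map (firstCoords h) = rhomeas μ N m h P :=
  map_firstCoords_withDensity_ofReal μ h hP.measurable hP.integrable hP.nonneg

theorem exists_resamplingBound (hP : IsSymmDensity μ N P) (h : 1 ≤ N)
    (hcond : ∃ B : Set Λ, MeasurableSet B ∧ 0 < μ B ∧ ∀ᵐ t ∂μ, t ∈ B → ∃ γ : ℝ, 0 < γ ∧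
      ∀ᵐ y ∂(pm μ (N - 1)),
        γ * rho μ N (N - 1) (Nat.sub_le N 1) P y ≤ P (glueLast h y t)) :
    ∃ (ν : Measure Λ) (C : ℝ≥0∞), IsProbabilityMeasure ν ∧ C ≠ ∞ ∧
      ResamplingBound (Pmeas μ N P) ν C := by
  obtain ⟨B, hB, hBpos, hbound⟩ := hcond
  refine exists_resamplingBound_withDensity μ h hP.measurable.ennreal_ofReal hP.permInvariant
    (measurable_rho (Nat.sub_le N 1) hP.measurable).ennreal_ofReal (hP.map_firstCoords _)
    hB hBpos <| hbound.mono fun t ht htB => ?_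
  obtain ⟨γ, hγ, hle⟩ := ht htB
  refine ⟨γ⁻¹.toNNReal, hle.mono fun y hy => ?_⟩
  calc ENNReal.ofReal (rho μ N (N - 1) (Nat.sub_le N 1) P y)
      ≤ ENNReal.ofReal (γ⁻¹ * P (glueLast h y t)) :=
        ENNReal.ofReal_le_ofReal <| (le_inv_mul_iff₀ hγ).2 hy
    _ = ENNReal.ofReal γ⁻¹ * ENNReal.ofReal (P (glueLast h y t)) :=
        ENNReal.ofReal_mul (inv_nonneg.2 hγ.le)

end IsSymmDensity

end SymmDensity

section InverseProblem

variable {μ : Measure Λ} {N m : ℕ} {P W U : (Fin N → Λ) → ℝ}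
  {u : (Fin m → Λ) → ℝ}

lemma hasSumStruct_mSum (μ : Measure Λ) (N : ℕ) (hu : u ∈ symmGenerators Λ m) :
    HasSumStruct μ N m (mSum N m u) u :=
  ⟨hu.1, hu.2, ae_eq_refl _⟩

lemma HasSumStruct.mem_symmGenerators (hU : HasSumStruct μ N m U u) :
    u ∈ symmGenerators Λ m :=
  ⟨hU.1, hU.2.1⟩

lemma HasSumStruct.integrable_Pmeas_iff (hU : HasSumStruct μ N m U u) :
    Integrable U (Pmeas μ N P) ↔ Integrable (mSum N m u) (Pmeas μ N P) :=
  integrable_congr ((withDensity_absolutelyContinuous _ _).ae_eq hU.2.2)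

lemma HasSumStruct.integrable_exp_Wmeas_iff (hU : HasSumStruct μ N m U u) (hW : Measurable W) :
    Integrable (fun x => exp (-U x)) (Wmeas μ N W) ↔
      Integrable (fun x => exp (-mSum N m u x - W x)) (pm μ N) := by
  rw [integrable_exp_neg_Wmeas_iff hW]
  exact integrable_congr (hU.2.2.mono fun x hx => by simp only [hx])

lemma HasSumStruct.memVP_iff (hU : HasSumStruct μ N m U u) (hP : IsSymmDensity μ N P)
    (hW : Measurable W) :
    memVP μ N m P W U ↔ Integrable (mSum N m u) (Pmeas μ N P) ∧
      Integrable (fun x => exp (-mSum N m u x - (W x + log (P x)))) (Pmeas μ N P) := by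
  rw [memVP, hU.integrable_Pmeas_iff, hU.integrable_exp_Wmeas_iff hW, hP.integrable_exp_Pmeas_iff,
    and_iff_left (⟨u, hU⟩ : ∃ v, HasSumStruct μ N m U v)]

lemma HasSumStruct.memVP_iff_mem_jensenDomain (hU : HasSumStruct μ N m U u)
    (hP : IsSymmDensity μ N P) (hW : Measurable W)
    (hH : Integrable (fun x => W x + log (P x)) (Pmeas μ N P)) :
    memVP μ N m P W U ↔
      (fun x => -mSum N m u x - (W x + log (P x))) ∈ jensenDomain (Pmeas μ N P) := by
  rw [hU.memVP_iff hP hW]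
  refine and_congr_left' ⟨fun hu => hu.neg.sub hH, fun hf => ?_⟩
  refine (hf.add hH).neg.congr (.of_forall fun x => ?_)
  simp

lemma integrable_add_log_of_memVP {V : (Fin N → Λ) → ℝ} (hP : IsSymmDensity μ N P)
    (hW : Measurable W) (hV : memVP μ N m P W V)
    (hH : Integrable (fun x => max (W x + log (P x)) 0) (Pmeas μ N P)) :
    Integrable (fun x => W x + log (P x)) (Pmeas μ N P) := by
  obtain ⟨v, hv⟩ := hV.2.2
  obtain ⟨hvi, hve⟩ := (hv.memVP_iff hP hW).1 hV
  have hm : Measurable fun x => mSum N m v x + (W x + log (P x)) :=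
    (measurable_mSum N hv.2.1).add (hW.add hP.measurable.log)
  have hpos : Integrable (fun x => max (mSum N m v x + (W x + log (P x))) 0) (Pmeas μ N P) := by
    refine (hvi.abs.add hH).mono' (hm.max measurable_const).aestronglyMeasurable
      (.of_forall fun x => ?_)
    rw [norm_of_nonneg (le_max_right _ _)]
    exact max_le (add_le_add (le_abs_self _) (le_max_left _ _))
      (add_nonneg (abs_nonneg _) (le_max_right _ _))
  have hsum := integrable_of_integrable_max_zero_of_integrable_exp_neg hm.aestronglyMeasurable hpos
    (by simpa only [neg_add', sub_eq_add_neg] using hve)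
  exact (hsum.sub hvi).congr (.of_forall fun x => add_sub_cancel_left _ _)

variable [SigmaFinite μ]

lemma HasSumStruct.rhoU_ae_eq_rho_iff (hU : HasSumStruct μ N m U u) (h : m ≤ N)
    (hP : IsSymmDensity μ N P) (hW : Measurable W)
    (he : Integrable (fun x => exp (-mSum N m u x - W x)) (pm μ N)) :
    rhoU μ N m h W U =ᵐ[pm μ m] rho μ N m h P ↔
      ((pm μ N).tilted fun x => -mSum N m u x - W x).map (firstCoords h) =
        rhomeas μ N m h P := by
  have hexp : (fun x => exp (-U x - W x)) =ᵐ[pm μ N] fun x => exp (-mSum N m u x - W x) :=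
    hU.2.2.mono fun x hx => by simp only [hx]
  let q x := exp (-mSum N m u x - W x) / ∫ x, exp (-mSum N m u x - W x) ∂(pm μ N)
  have hq : Measurable q := ((measurable_mSum N hU.2.1).neg.sub hW).exp.div_const _
  have hq0 (x : Fin N → Λ) : 0 ≤ q x := by positivity
  have hrhoU : rhoU μ N m h W U =ᵐ[pm μ m] rho μ N m h q := by
    rw [rhoU_eq_rho h (he.congr hexp.symm), integral_congr_ae hexp]
    exact rho_congr_ae h (hexp.mono fun x hx => congrArg (· / _) hx)
  have hmap : ((pm μ N).tilted fun x => -mSum N m u x - W x).map (firstCoords h) =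
      rhomeas μ N m h q :=
    map_firstCoords_withDensity_ofReal μ h hq (he.div_const _) (.of_forall hq0)
  rw [hrhoU.congr_left, hmap, rhomeas_eq_iff h hq hP.measurable (.of_forall hq0) hP.nonneg]

variable {ν : Measure Λ} [IsProbabilityMeasure ν] {C : ℝ≥0∞}

lemma HasSumStruct.integrable_generator (hU : HasSumStruct μ N m U u)
    (hP : IsSymmDensity μ N P) (hR : ResamplingBound (Pmeas μ N P) ν C) (hC : C ≠ ∞) (h : m ≤ N)
    (hUi : Integrable U (Pmeas μ N P)) : Integrable u (rhomeas μ N m h P) := by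
  have := hP.isProbabilityMeasure
  rw [← hP.map_firstCoords h]
  exact hR.integrable_generator hC h hU.mem_symmGenerators (hU.integrable_Pmeas_iff.1 hUi)

theorem memVP_iff_memVrho (hP : IsSymmDensity μ N P) (hR : ResamplingBound (Pmeas μ N P) ν C)
    (hC : C ≠ ∞) (h : m ≤ N) (V : (Fin N → Λ) → ℝ) :
    memVP μ N m P W V ↔ memVrho μ N m h P W V := by
  constructor
  · rintro ⟨hVi, hVe, v, hv⟩
    exact ⟨hVe, v, hv, hv.integrable_generator hP hR hC h hVi⟩
  · rintro ⟨hVe, v, hv, hvi⟩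
    rw [← hP.map_firstCoords h] at hvi
    exact ⟨hv.integrable_Pmeas_iff.2 (hP.permInvariant.integrable_mSum h hvi), hVe, v, hv⟩

theorem exists_memVP_rhoU_ae_eq_rho (hP : IsSymmDensity μ N P)
    (hR : ResamplingBound (Pmeas μ N P) ν C) (h : m ≤ N) (hW : Measurable W)
    (hWs : ∀ σ : Equiv.Perm (Fin N), ∀ᵐ x ∂(pm μ N), W (x ∘ σ) = W x)
    (hne : ∃ V, memVP μ N m P W V)
    (hH : Integrable (fun x => max (W x + log (P x)) 0) (Pmeas μ N P)) :
    ∃ U u, HasSumStruct μ N m U u ∧ memVP μ N m P W U ∧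
      rhoU μ N m h W U =ᵐ[pm μ m] rho μ N m h P := by
  obtain ⟨V, hV⟩ := hne
  obtain ⟨v, hv⟩ := hV.2.2
  have hHi := integrable_add_log_of_memVP hP hW hV hH
  have hHs (σ : Equiv.Perm (Fin N)) :
      ∀ᵐ x ∂(Pmeas μ N P), W (x ∘ σ) + log (P (x ∘ σ)) = W x + log (P x) := by
    refine (withDensity_absolutelyContinuous _ _).ae_le ?_
    filter_upwards [hWs σ, hP.symm σ] with x hWx hPx
    rw [hWx, hPx]
  have := hP.isProbabilityMeasure
  obtain ⟨u, hu, hdom, hmap⟩ := hR.exists_map_firstCoords_tilted_eq hP.permInvariant h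
    (hW.add hP.measurable.log) hHs
    ⟨_, ⟨v, hv.mem_symmGenerators, rfl⟩, (hv.memVP_iff_mem_jensenDomain hP hW hHi).1 hV⟩
  have hU := hasSumStruct_mSum μ N hu
  refine ⟨mSum N m u, u, hU, (hU.memVP_iff_mem_jensenDomain hP hW hHi).2 hdom, ?_⟩
  rw [hU.rhoU_ae_eq_rho_iff h hP hW ((hP.integrable_exp_Pmeas_iff _ _).1 hdom.2),
    ← hP.Pmeas_tilted, ← hP.map_firstCoords h]
  exact hmap

theorem sub_ae_eq_const_of_rhoU_ae_eq_rho (hP : IsSymmDensity μ N P)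
    (hR : ResamplingBound (Pmeas μ N P) ν C) (hC : C ≠ ∞) (h : m ≤ N) (hW : Measurable W)
    (hWs : ∀ σ : Equiv.Perm (Fin N), ∀ᵐ x ∂(pm μ N), W (x ∘ σ) = W x)
    {U₀ U₁ : (Fin N → Λ) → ℝ} {u₀ u₁ : (Fin m → Λ) → ℝ}
    (hV₀ : memVP μ N m P W U₀) (hV₁ : memVP μ N m P W U₁)
    (hU₀ : HasSumStruct μ N m U₀ u₀) (hU₁ : HasSumStruct μ N m U₁ u₁)
    (hρ₀ : rhoU μ N m h W U₀ =ᵐ[pm μ m] rho μ N m h P)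
    (hρ₁ : rhoU μ N m h W U₁ =ᵐ[pm μ m] rho μ N m h P) :
    (∃ c : ℝ, (fun x => U₁ x - U₀ x) =ᵐ[pm μ N] fun _ => c) ∧
      ∃ c : ℝ, (fun y => u₁ y - u₀ y) =ᵐ[pm μ m] fun _ => c := by
  have he₀ := (hU₀.integrable_exp_Wmeas_iff hW).1 hV₀.2.1
  have he₁ := (hU₁.integrable_exp_Wmeas_iff hW).1 hV₁.2.1
  obtain ⟨c, hc⟩ := (permInvariant_pm μ N).exists_mSum_sub_ae_eq_const h hW hWs
    hU₀.mem_symmGenerators hU₁.mem_symmGenerators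
    (hU₀.integrable_generator hP hR hC h hV₀.1) (hU₁.integrable_generator hP hR hC h hV₁.1)
    he₀ he₁ ((hU₀.rhoU_ae_eq_rho_iff h hP hW he₀).1 hρ₀)
    ((hU₁.rhoU_ae_eq_rho_iff h hP hW he₁).1 hρ₁)
  constructor
  · refine ⟨c, ?_⟩
    filter_upwards [hc, hU₀.2.2, hU₁.2.2] with x hx h₀ h₁
    rw [h₀, h₁, ← hx, (isLinearMap_mSum N m).map_sub, Pi.sub_apply]
  · obtain ⟨b, hb⟩ := hR.exists_generator_ae_eq_const h
      (sub_mem hU₁.mem_symmGenerators hU₀.mem_symmGenerators).1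
      ((withDensity_absolutelyContinuous _ _).ae_le hc)
    have := hP.neZero_pm
    exact ⟨b, ae_of_ae_firstCoords h (hP.pm_absolutelyContinuous.ae_le hb)⟩

end InverseProblem

theorem statement17_general (μ : Measure Λ) [SigmaFinite μ] (N m : ℕ) (hN : 1 ≤ N) (hmN : m ≤ N)
    (P W : (Fin N → Λ) → ℝ) (hP : IsSymmDensity μ N P) (hW : Measurable W)
    (hWsymm : ∀ σ : Equiv.Perm (Fin N), ∀ᵐ x ∂(pm μ N), W (x ∘ σ) = W x)
    (hcond : ∃ B : Set Λ, MeasurableSet B ∧ 0 < μ B ∧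
      ∀ᵐ t ∂μ, t ∈ B → ∃ γ : ℝ, 0 < γ ∧
        ∀ᵐ y ∂(pm μ (N - 1)),
          γ * rho μ N (N - 1) (Nat.sub_le N 1) P y ≤ P (glueLast hN y t)) :
    (∀ V, memVP μ N m P W V ↔ memVrho μ N m hmN P W V) ∧
    ((∃ V, memVP μ N m P W V) →
      Integrable (fun x => max (W x + log (P x)) 0) (Pmeas μ N P) →
      ∃ U u, HasSumStruct μ N m U u ∧ memVP μ N m P W U ∧
        rhoU μ N m hmN W U =ᵐ[pm μ m] rho μ N m hmN P) ∧
    (∀ U₀ U₁ u₀ u₁, memVP μ N m P W U₀ → memVP μ N m P W U₁ →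
      HasSumStruct μ N m U₀ u₀ → HasSumStruct μ N m U₁ u₁ →
      rhoU μ N m hmN W U₀ =ᵐ[pm μ m] rho μ N m hmN P →
      rhoU μ N m hmN W U₁ =ᵐ[pm μ m] rho μ N m hmN P →
      (∃ C : ℝ, (fun x => U₁ x - U₀ x) =ᵐ[pm μ N] fun _ => C) ∧
      (∃ c : ℝ, (fun y => u₁ y - u₀ y) =ᵐ[pm μ m] fun _ => c)) := by
  obtain ⟨ν, C, hν, hC, hR⟩ := hP.exists_resamplingBound hN hcond
  exact ⟨memVP_iff_memVrho hP hR hC hmN, exists_memVP_rhoU_ae_eq_rho hP hR hmN hW hWsymm,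
    fun _ _ _ _ => sub_ae_eq_const_of_rhoU_ae_eq_rho hP hR hC hmN hW hWsymm⟩

/-- Suppose there is `B ⊂ Λ` of positive measure such that for a.e.
`x_N ∈ B` there is `γ(x_N) > 0` with `P(·, x_N) ≥ γ(x_N) ρ^{(N-1)}` a.e. on `Λ^{N-1}`.
Then `V_P = V_{ρ^{(m)}}`.  If moreover `V_P ≠ ∅` and `(W + log P)₊ ∈ L¹(Λ^N; P d^N x)`,
then there is `U ∈ V_P` with `m`-sum structure such that `ρ_U^{(m)} = ρ^{(m)}` a.e.,
and any two such solutions differ a.e. by a real constant, as do their generators. -/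
theorem statement17 (μ : Measure Λ) [SigmaFinite μ] (hμ : μ ≠ 0)
    (N m : ℕ) (hN : 2 ≤ N) (hm : 1 ≤ m) (hmN : m ≤ N - 1)
    (P W : (Fin N → Λ) → ℝ) (hPmeas : Measurable P)
    (hPprob : ∫⁻ x, ENNReal.ofReal (P x) ∂(pm μ N) = 1)
    (hPpos : ∀ᵐ x ∂(pm μ N), 0 < P x)
    (hPsymm : ∀ σ : Equiv.Perm (Fin N), ∀ᵐ x ∂(pm μ N), P (x ∘ σ) = P x)
    (hWmeas : Measurable W)
    (hWsymm : ∀ σ : Equiv.Perm (Fin N), ∀ᵐ x ∂(pm μ N), W (x ∘ σ) = W x)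
    (hcond : ∃ B : Set Λ, MeasurableSet B ∧ 0 < μ B ∧
      ∀ᵐ t ∂μ, t ∈ B → ∃ γ : ℝ, 0 < γ ∧
        ∀ᵐ y ∂(pm μ (N - 1)),
          γ * rho μ N (N - 1) (Nat.sub_le N 1) P y
            ≤ P (glueLast (by omega) y t)) :
    (∀ V, memVP μ N m P W V
        ↔ memVrho μ N m (le_trans hmN (Nat.sub_le N 1)) P W V) ∧
    ((∃ V, memVP μ N m P W V) →
      Integrable (fun x => max (W x + Real.log (P x)) 0) (Pmeas μ N P) →
      (∃ U u, HasSumStruct μ N m U u ∧ memVP μ N m P W U ∧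
          rhoU μ N m (le_trans hmN (Nat.sub_le N 1)) W U
            =ᵐ[pm μ m] rho μ N m (le_trans hmN (Nat.sub_le N 1)) P) ∧
      (∀ U₀ U₁ u₀ u₁, memVP μ N m P W U₀ → memVP μ N m P W U₁ →
          HasSumStruct μ N m U₀ u₀ → HasSumStruct μ N m U₁ u₁ →
          rhoU μ N m (le_trans hmN (Nat.sub_le N 1)) W U₀
            =ᵐ[pm μ m] rho μ N m (le_trans hmN (Nat.sub_le N 1)) P →
          rhoU μ N m (le_trans hmN (Nat.sub_le N 1)) W U₁
            =ᵐ[pm μ m] rho μ N m (le_trans hmN (Nat.sub_le N 1)) P →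
          (∃ C : ℝ, (fun x => U₁ x - U₀ x) =ᵐ[pm μ N] fun _ => C) ∧
          (∃ c : ℝ, (fun y => u₁ y - u₀ y) =ᵐ[pm μ m] fun _ => c))) :=
  have h := statement17_general μ N m (by omega) (le_trans hmN (Nat.sub_le N 1)) P W
    ⟨hPmeas, hPprob, hPpos, hPsymm⟩ hWmeas hWsymm hcond
  ⟨h.1, fun hV hH => ⟨h.2.1 hV hH, h.2.2⟩⟩

end
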